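/- Let a ≥ b > 0 and c > 0 satisfy Δ < −1, where Δ := (a²+b²−c²)/(2ab). Let ζ > 0 be defined by Δ = −cosh(ζ), and let θ ∈ (0,π) be the unique solution of a·sinh(θζ/π) = b·sinh((1−θ/π)ζ). Then the per-site free energy f(a,b,c) exists and f(a,b,c) = log a + ζθ/π + Σ_{n=1}^{∞} (e^{−nζ}/n) · sinh(2nζθ/π)/cosh(nζ). -/

import Mathlib

open MeasureTheory Filter
open scoped Real BigOperators

noncomputable section

namespace SixVertexFE

/-- Configurations on the `N × M` torus: each vertex `v` carries a horizontal edge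
(from `v` to `v+(1,0)`) and a vertical edge (from `v` to `v+(0,1)`).
First component: `true` = the horizontal edge points East.
Second component: `true` = the vertical edge points North. -/
abbrev Cfg (N M : ℕ) := ((Fin N × Fin M) → Bool) × ((Fin N × Fin M) → Bool)

/-- the predecessor (`i - 1`) on the discrete circle `Fin N`. -/
def predF {N : ℕ} (i : Fin N) : Fin N := ⟨(i.1 + (N - 1)) % N, Nat.mod_lt _ i.pos⟩

/-- number of edges incident to `v` that point towards `v`. -/
abbrev inArrows {N M : ℕ} (ω : Cfg N M) (v : Fin N × Fin M) : ℕ :=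
  (if ω.1 (predF v.1, v.2) = true then 1 else 0) +
  (if ω.1 v = false then 1 else 0) +
  (if ω.2 (v.1, predF v.2) = true then 1 else 0) +
  (if ω.2 v = false then 1 else 0)

/-- the ice rule: exactly two incoming arrows at every vertex. -/
abbrev IsSixVertex {N M : ℕ} (ω : Cfg N M) : Prop := ∀ v, inArrows ω v = 2

/-- weight of a vertex: `c` if the two horizontal edges at `v` point in opposite
directions, `a` for all-East-all-North or all-West-all-South, `b` for
all-East-all-South or all-West-all-North. -/
def vWeight (a b c : ℝ) {N M : ℕ} (ω : Cfg N M) (v : Fin N × Fin M) : ℝ :=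
  if ω.1 (predF v.1, v.2) ≠ ω.1 v then c
  else if (ω.1 (predF v.1, v.2) = true ∧ ω.1 v = true ∧
            ω.2 (v.1, predF v.2) = true ∧ ω.2 v = true) ∨
          (ω.1 (predF v.1, v.2) = false ∧ ω.1 v = false ∧
            ω.2 (v.1, predF v.2) = false ∧ ω.2 v = false) then a
  else if (ω.1 (predF v.1, v.2) = true ∧ ω.1 v = true ∧
            ω.2 (v.1, predF v.2) = false ∧ ω.2 v = false) ∨
          (ω.1 (predF v.1, v.2) = false ∧ ω.1 v = false ∧
            ω.2 (v.1, predF v.2) = true ∧ ω.2 v = true) then b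
  else 0

/-- weight of a configuration. -/
def W (a b c : ℝ) {N M : ℕ} (ω : Cfg N M) : ℝ := ∏ v, vWeight a b c ω v

/-- partition function of the six-vertex model on the `N × M` torus. -/
def Z (N M : ℕ) (a b c : ℝ) : ℝ :=
  ∑ ω : Cfg N M, if IsSixVertex ω then W a b c ω else 0

/-- number of North-pointing vertical edges in row `j`. -/
abbrev RowCount {N M : ℕ} (ω : Cfg N M) (j : Fin M) : ℕ :=
  (Finset.univ.filter fun i : Fin N => ω.2 (i, j) = true).card

/-- partition function restricted to configurations with exactly `n` up arrows per row. -/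
def Zn (N M n : ℕ) (a b c : ℝ) : ℝ :=
  ∑ ω : Cfg N M, if IsSixVertex ω ∧ (∀ j, RowCount ω j = n) then W a b c ω else 0

/-- `F` is the per-site free energy of the six-vertex model with weights `a, b, c`:
the inner limit in `M` exists for every even `N ≥ 2`, and the resulting quantities
converge to `F` as `N → ∞` along even `N`. -/
def FreeEnergyIs (a b c F : ℝ) : Prop :=
  ∃ g : ℕ → ℝ,
    (∀ N : ℕ, Even N → 2 ≤ N →
      Tendsto (fun M : ℕ => Real.log (Z N M a b c) / (M * N)) atTop (nhds (g N))) ∧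
    Tendsto g (atTop ⊓ Filter.principal {N | Even N}) (nhds F)

/-- `L = f_N^{(n)}(a,b,c)`, the free energy of the six-vertex model in the sector
with `n` up arrows per row. -/
def SectorFE (N n : ℕ) (a b c L : ℝ) : Prop :=
  Tendsto (fun M : ℕ => Real.log (Zn N M n a b c) / (N * M)) atTop (nhds L)

end SixVertexFE

/-!
By row-to-row transfer, `Z` is the trace of a power of the transfer matrix `T(t)`, where
`a : b : c = sinh (ζ - t) : sinh t : sinh ζ`. The `T(t)` commute (Yang–Baxter) and are normal, hence
have joint eigenvectors independent of `t`, with eigenvalues `Λ(t)` that are entire, `πi`-periodic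
and satisfy `Λ(ζ - conj t) = conj Λ(t)`. On the imaginary axis the Lax operator is a multiple of a
unitary, so `|Λ(t)| ≤ 2 |sinh (ζ - t)|^N` there, and by Phragmén–Lindelöf
`|Λ(t)| ≤ 2 exp (N re F(t))` on the strip `0 ≤ re t ≤ ζ`, where `F` is the harmonic extension of the
boundary values `log |sinh (ζ - t)|`; its value at real `t` is the series in the theorem.

For the matching lower bound, fusion gives `Λ(t) Λ(ζ + t) = (sinh (ζ - t) sinh (ζ + t))^N + R(t)`,
where the left side is `|Λ(t)|²` on the imaginary axis and `R` vanishes to order `N` at `t = 0`. The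
Schwarz lemma makes `R` exponentially small relative to the main term, so every `|Λ(t)|` is nearly
`|sinh (ζ - t)|^N` on the boundary of the strip. Phragmén–Lindelöf for `1 / Λ` then yields the lower
bound for any `Λ` without zeros in the strip. For large `ζ` the eigenvalue overlapping the Néel
state is such a `Λ`. Moreover such a `Λ` is bounded below on the strip uniformly in `ζ`, so an
eigenvalue at a nearby `ζ'` whose eigenvector overlaps with its own has no zeros either, and the
property propagates by continuity from large `ζ` down to every `ζ > 0`.
-/

namespace SixVertexFE

section

open Matrix
open Complex (I sinh cosh)
open scoped Kronecker ComplexConjugate Topology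
open Complex.HadamardThreeLines (verticalClosedStrip)

section Lax

variable {S A B R R' : Type*}

lemma sum_fin_succ_pi [Fintype S] [AddCommMonoid R] {n : ℕ} (f : (Fin (n + 1) → S) → R) :
    ∑ ρ, f ρ = ∑ r : S, ∑ ρ : Fin n → S, f (Fin.cons r ρ) := by
  rw [← (Fin.consEquiv fun _ : Fin (n + 1) => S).sum_comp, Fintype.sum_prod_type]
  rfl

lemma sum_prod_ofFn [Fintype S] [Semiring R] {n : ℕ} (C : Fin n → S → R) :
    ∑ ρ : Fin n → S, (List.ofFn fun i => C i (ρ i)).prod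
      = (List.ofFn fun i => ∑ r, C i r).prod := by
  induction n with
  | zero => simp
  | succ n ih =>
    rw [sum_fin_succ_pi, List.ofFn_succ, List.prod_cons, ← ih, Finset.sum_mul_sum]
    simp only [List.ofFn_succ, List.prod_cons, Fin.cons_zero, Fin.cons_succ]

/-- Composition in the physical space of two Lax operators, acting on the tensor product of their
auxiliary spaces. -/
def laxComp [Fintype S] [Semiring R] (L : S → S → Matrix A A R) (L' : S → S → Matrix B B R) :
    S → S → Matrix (A × B) (A × B) R :=
  fun s t => ∑ r, L s r ⊗ₖ L' r t

lemma laxComp_apply [Fintype S] [Semiring R] (L : S → S → Matrix A A R)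
    (L' : S → S → Matrix B B R) (s t : S) (i j : A × B) :
    laxComp L L' s t i j = ∑ r, L s r i.1 j.1 * L' r t i.2 j.2 := by
  simp [laxComp, Matrix.sum_apply]

variable [Fintype A] [DecidableEq A] [Fintype B] [DecidableEq B]

/-- The monodromy of a Lax operator around a row of `N` sites: the ordered product of the operators
`L (σ i) (τ i)` on the auxiliary space `A`, where `σ` and `τ` are the spins below and above the row.
A Lax operator `S ⊗ A → S ⊗ A` is encoded by its blocks `L s t : A → A`. -/
def monodromy [Semiring R] (L : S → S → Matrix A A R) {N : ℕ} (σ τ : Fin N → S) : Matrix A A R :=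
  (List.ofFn fun i => L (σ i) (τ i)).prod

/-- The row-to-row transfer matrix of a Lax operator with periodic boundary conditions. -/
def transferMatrix [Semiring R] (L : S → S → Matrix A A R) (N : ℕ) :
    Matrix (Fin N → S) (Fin N → S) R :=
  Matrix.of fun σ τ => (monodromy L σ τ).trace

/-- The Lax operator satisfies `L Lᴴ = r` as an operator on the tensor product of the physical and
the auxiliary space. -/
def IsScaledUnitary [Fintype S] [DecidableEq S] [CommRing R] [StarRing R]
    (L : S → S → Matrix A A R) (r : R) : Prop :=
  ∀ s s', ∑ t, L s t * (L s' t)ᴴ = (if s = s' then r else 0) • 1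

section Semiring

variable [Semiring R] [Semiring R'] (L : S → S → Matrix A A R)

lemma monodromy_zero (σ τ : Fin 0 → S) : monodromy L σ τ = 1 := by simp [monodromy]

lemma monodromy_succ {N : ℕ} (σ τ : Fin (N + 1) → S) :
    monodromy L σ τ = L (σ 0) (τ 0) * monodromy L (Fin.tail σ) (Fin.tail τ) := by
  simp [monodromy, List.ofFn_succ, Fin.tail]

lemma monodromy_map (f : R →+* R') {N : ℕ} (σ τ : Fin N → S) :
    monodromy (fun s t => (L s t).map f) σ τ = (monodromy L σ τ).map f := by
  induction N with
  | zero => simp [monodromy_zero, Matrix.map_one]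
  | succ n ih => rw [monodromy_succ, monodromy_succ, ih, Matrix.map_mul]

lemma monodromy_intertwining {L : S → S → Matrix A A R} {L' : S → S → Matrix B B R}
    {G : Matrix B A R} (h : ∀ s t, L' s t * G = G * L s t) {N : ℕ} (σ τ : Fin N → S) :
    monodromy L' σ τ * G = G * monodromy L σ τ := by
  induction N with
  | zero => simp [monodromy_zero]
  | succ n ih =>
    rw [monodromy_succ, monodromy_succ, Matrix.mul_assoc, ih, ← Matrix.mul_assoc, h,
      Matrix.mul_assoc]

lemma monodromy_blockTriangular {L : S → S → Matrix (A ⊕ B) (A ⊕ B) R}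
    (h : ∀ s t, (L s t).toBlocks₂₁ = 0) {N : ℕ} (σ τ : Fin N → S) :
    (monodromy L σ τ).toBlocks₁₁ = monodromy (fun s t => (L s t).toBlocks₁₁) σ τ ∧
    (monodromy L σ τ).toBlocks₂₁ = 0 ∧
    (monodromy L σ τ).toBlocks₂₂ = monodromy (fun s t => (L s t).toBlocks₂₂) σ τ := by
  induction N with
  | zero =>
    simp only [monodromy_zero, ← Matrix.fromBlocks_one, toBlocks_fromBlocks₁₁,
      toBlocks_fromBlocks₂₁, toBlocks_fromBlocks₂₂, and_self]
  | succ n ih =>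
    obtain ⟨h₁₁, h₂₁, h₂₂⟩ := ih (Fin.tail σ) (Fin.tail τ)
    have hL := Matrix.fromBlocks_toBlocks (L (σ 0) (τ 0))
    have hM := Matrix.fromBlocks_toBlocks (monodromy L (Fin.tail σ) (Fin.tail τ))
    rw [h] at hL
    rw [h₂₁] at hM
    simp only [monodromy_succ, ← h₁₁, ← h₂₂]
    rw [← hL, ← hM, Matrix.fromBlocks_multiply]
    simp

lemma transferMatrix_transpose (N : ℕ) :
    (transferMatrix L N)ᵀ = transferMatrix (fun s t => L t s) N := rfl

lemma transferMatrix_map (f : R →+* R') (N : ℕ) :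
    (transferMatrix L N).map f = transferMatrix (fun s t => (L s t).map f) N := by
  ext σ τ
  simp [transferMatrix, monodromy_map, Matrix.trace]

lemma transferMatrix_blockTriangular {L : S → S → Matrix (A ⊕ B) (A ⊕ B) R}
    (h : ∀ s t, (L s t).toBlocks₂₁ = 0) (N : ℕ) :
    transferMatrix L N = transferMatrix (fun s t => (L s t).toBlocks₁₁) N
      + transferMatrix (fun s t => (L s t).toBlocks₂₂) N := by
  ext σ τ
  obtain ⟨h₁₁, -, h₂₂⟩ := monodromy_blockTriangular h σ τ
  simp only [transferMatrix, Matrix.add_apply, Matrix.of_apply, ← h₁₁, ← h₂₂, Matrix.trace,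
    Fintype.sum_sum_type]
  rfl

end Semiring

section CommSemiring

variable [CommSemiring R] (L : S → S → Matrix A A R)

lemma monodromy_smul (c : R) {N : ℕ} (σ τ : Fin N → S) :
    monodromy (fun s t => c • L s t) σ τ = c ^ N • monodromy L σ τ := by
  induction N with
  | zero => simp [monodromy_zero]
  | succ n ih =>
    rw [monodromy_succ, monodromy_succ, ih, Matrix.smul_mul, Matrix.mul_smul, smul_smul, pow_succ']

lemma ite_eq_mul_ite_tail_eq [DecidableEq S] {n : ℕ} (σ τ : Fin (n + 1) → S) (x y : R) :
    (if σ 0 = τ 0 then x else 0) * (if Fin.tail σ = Fin.tail τ then y else 0)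
      = if σ = τ then x * y else 0 := by
  have h : σ = τ ↔ σ 0 = τ 0 ∧ Fin.tail σ = Fin.tail τ := by
    rw [← Fin.cons_inj (α := fun _ => S), Fin.cons_self_tail, Fin.cons_self_tail]
  rw [ite_zero_mul_ite_zero]
  simp only [h]

lemma monodromy_diagonal [DecidableEq S] (f : R) {N : ℕ} (σ τ : Fin N → S) :
    monodromy (fun s t => (if s = t then f else 0) • (1 : Matrix A A R)) σ τ
      = (if σ = τ then f ^ N else 0) • 1 := by
  induction N with
  | zero => simp [monodromy_zero, Subsingleton.elim σ τ]
  | succ n ih =>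
    rw [monodromy_succ, ih, Matrix.smul_mul, Matrix.one_mul, smul_smul,
      ite_eq_mul_ite_tail_eq, pow_succ']

lemma transferMatrix_smul (c : R) (N : ℕ) :
    transferMatrix (fun s t => c • L s t) N = c ^ N • transferMatrix L N := by
  ext σ τ
  simp [transferMatrix, monodromy_smul]

lemma transferMatrix_diagonal [DecidableEq S] (f : R) (N : ℕ) :
    transferMatrix (fun s t : S => (if s = t then f else 0) • (1 : Matrix A A R)) N
      = (Fintype.card A * f ^ N) • 1 := by
  ext σ τ
  rw [transferMatrix, Matrix.of_apply, monodromy_diagonal]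
  by_cases h : σ = τ <;> simp [h, mul_comm]

lemma transferMatrix_eq_of_intertwining {L : S → S → Matrix A A R} {L' : S → S → Matrix B B R}
    {G : Matrix B A R} {H : Matrix A B R} (hGH : G * H = 1) (hHG : H * G = 1)
    (h : ∀ s t, L' s t * G = G * L s t) (N : ℕ) : transferMatrix L' N = transferMatrix L N := by
  ext σ τ
  calc (monodromy L' σ τ).trace = (monodromy L' σ τ * G * H).trace := by
        rw [Matrix.mul_assoc, hGH, Matrix.mul_one]
    _ = (G * (monodromy L σ τ * H)).trace := by
        rw [monodromy_intertwining h, Matrix.mul_assoc]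
    _ = (monodromy L σ τ).trace := by
        rw [Matrix.trace_mul_comm, Matrix.mul_assoc, hHG, Matrix.mul_one]

lemma monodromy_kronecker (L' : S → S → Matrix B B R) {N : ℕ} (σ ρ τ : Fin N → S) :
    monodromy L σ ρ ⊗ₖ monodromy L' ρ τ
      = (List.ofFn fun i => L (σ i) (ρ i) ⊗ₖ L' (ρ i) (τ i)).prod := by
  induction N with
  | zero => simp [monodromy]
  | succ n ih =>
    rw [monodromy_succ, monodromy_succ, Matrix.mul_kronecker_mul, ih, List.ofFn_succ,
      List.prod_cons]
    rfl

lemma transferMatrix_mul [Fintype S] (L' : S → S → Matrix B B R) (N : ℕ) :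
    transferMatrix L N * transferMatrix L' N = transferMatrix (laxComp L L') N := by
  ext σ τ
  simp only [Matrix.mul_apply, transferMatrix, Matrix.of_apply]
  simp only [← Matrix.trace_kronecker, monodromy_kronecker, ← Matrix.trace_sum]
  rw [sum_prod_ofFn fun i r => L (σ i) r ⊗ₖ L' r (τ i)]
  rfl

end CommSemiring

lemma IsScaledUnitary.monodromy [Fintype S] [DecidableEq S] [CommRing R] [StarRing R]
    {L : S → S → Matrix A A R} {r : R} (hL : IsScaledUnitary L r) (N : ℕ) :
    IsScaledUnitary (monodromy (N := N) L) (r ^ N) := by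
  induction N with
  | zero => intro σ σ'; simp [monodromy_zero, Subsingleton.elim σ σ']
  | succ n ih =>
    intro σ σ'
    calc ∑ τ, SixVertexFE.monodromy L σ τ * (SixVertexFE.monodromy L σ' τ)ᴴ
        = ∑ t, L (σ 0) t * (∑ τ : Fin n → S, SixVertexFE.monodromy L (Fin.tail σ) τ *
            (SixVertexFE.monodromy L (Fin.tail σ') τ)ᴴ) * (L (σ' 0) t)ᴴ := by
          rw [sum_fin_succ_pi]
          refine Finset.sum_congr rfl fun t _ => ?_
          simp only [monodromy_succ, conjTranspose_mul, Fin.cons_zero, Fin.tail_cons,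
            Finset.mul_sum, Finset.sum_mul, Matrix.mul_assoc]
      _ = (if σ = σ' then r ^ (n + 1) else 0) • 1 := by
          simp only [ih _ _, Matrix.mul_smul, Matrix.smul_mul, Matrix.mul_one, ← Finset.smul_sum,
            hL _ _, smul_smul]
          rw [mul_comm, ite_eq_mul_ite_tail_eq, pow_succ']

end Lax

section HyperbolicIdentities

-- The four-point (Fay) identity behind the Yang–Baxter equation, the fusion relation and unitarity.
lemma sinh_sub_mul_sinh_cyclic (x y z : ℂ) :
    sinh (x - y) * sinh z + sinh (y - z) * sinh x + sinh (z - x) * sinh y = 0 := by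
  simp only [Complex.sinh_sub]
  ring

lemma sinh_sub_mul_sinh_add (x y : ℂ) :
    sinh (x - y) * sinh (x + y) = sinh x ^ 2 - sinh y ^ 2 := by
  have h := sinh_sub_mul_sinh_cyclic x y (x + y)
  rw [sub_add_cancel_right, add_sub_cancel_left, Complex.sinh_neg] at h
  linear_combination h

lemma sinh_add_pi_mul_I (z : ℂ) : sinh (z + π * I) = -sinh z := by
  simp [Complex.sinh_add, Complex.sinh_mul_I, Complex.cosh_mul_I]

lemma norm_sinh_sq (z : ℂ) : ‖sinh z‖ ^ 2 = Real.sinh z.re ^ 2 + Real.sin z.im ^ 2 := by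
  have hz : sinh z = (Real.sinh z.re * Real.cos z.im : ℝ)
      + (Real.cosh z.re * Real.sin z.im : ℝ) * I := by
    conv_lhs => rw [← Complex.re_add_im z, Complex.sinh_add, Complex.sinh_mul_I, Complex.cosh_mul_I]
    push_cast
    ring
  rw [hz, ← Complex.normSq_eq_norm_sq, Complex.normSq_add_mul_I]
  linear_combination Real.sinh z.re ^ 2 * Real.sin_sq_add_cos_sq z.im
    + Real.sin z.im ^ 2 * Real.cosh_sq z.re

lemma sinh_ne_zero_of_re_ne_zero {z : ℂ} (h : z.re ≠ 0) : sinh z ≠ 0 := by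
  intro h0
  have hnorm := norm_sinh_sq z
  have hpos : 0 < Real.sinh z.re ^ 2 := by
    have : Real.sinh z.re ≠ 0 := mt Real.sinh_eq_zero.1 h
    positivity
  rw [h0, norm_zero] at hnorm
  nlinarith [sq_nonneg (Real.sin z.im)]

end HyperbolicIdentities

section SixVertexLax

variable {R : Type*}

/-- The six-vertex Lax operator with weights `a, b, c`: `s, s'` are the vertical edges below and
above a vertex, `h, h'` the horizontal edges to its left and right. -/
def sixVertexLax [Zero R] (a b c : R) (s s' : Bool) : Matrix Bool Bool R :=
  Matrix.of fun h h' => if h = h' then (if s = s' then (if h = s then a else b) else 0)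
    else (if h = s' ∧ h' = s then c else 0)

/-- The Pauli matrix `σˣ`, which exchanges the roles of the weights `a` and `b`. -/
def pauliX [Zero R] [One R] : Matrix Bool Bool R := Matrix.of fun h h' => if h = h' then 0 else 1

/-- The Pauli matrix `σᶻ`, which flips the sign of the weight `c`. -/
def pauliZ [Ring R] : Matrix Bool Bool R :=
  Matrix.diagonal fun h => if h then 1 else -1

/-- The `R`-matrix composed with the flip of the two tensor factors. -/
def rCheck [Zero R] (a b c : R) : Matrix (Bool × Bool) (Bool × Bool) R :=
  Matrix.of fun p q => if p.1 = p.2 then (if p = q then a else 0)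
    else (if p = q then c else if p = q.swap then b else 0)

variable [CommRing R]

lemma sixVertexLax_map {R' : Type*} [CommRing R'] (f : R →+* R') (a b c : R) (s s' : Bool) :
    (sixVertexLax a b c s s').map f = sixVertexLax (f a) (f b) (f c) s s' := by
  ext h h'
  simp [sixVertexLax, apply_ite f]

lemma sixVertexLax_smul (r a b c : R) (s s' : Bool) :
    sixVertexLax (r * a) (r * b) (r * c) s s' = r • sixVertexLax a b c s s' := by
  ext h h'
  simp [sixVertexLax]

lemma pauliX_mul_pauliX : (pauliX : Matrix Bool Bool R) * pauliX = 1 := by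
  ext h h'
  cases h <;> cases h' <;> simp [pauliX, Matrix.mul_apply]

lemma pauliZ_mul_pauliZ : (pauliZ : Matrix Bool Bool R) * pauliZ = 1 := by
  ext h h'
  cases h <;> cases h' <;> simp [pauliZ]

lemma sixVertexLax_mul_pauliX (a b c : R) (s s' : Bool) :
    sixVertexLax b a c s s' * pauliX = pauliX * sixVertexLax a b c s' s := by
  ext h h'
  cases h <;> cases h' <;> cases s <;> cases s' <;>
    simp [pauliX, sixVertexLax, Matrix.mul_apply]

lemma sixVertexLax_neg_mul_pauliZ (a b c : R) (s s' : Bool) :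
    sixVertexLax (-a) (-b) c s s' * pauliZ = pauliZ * ((-1 : R) • sixVertexLax a b c s s') := by
  ext h h'
  cases h <;> cases h' <;> cases s <;> cases s' <;> simp [pauliZ, sixVertexLax]

lemma rCheck_mul_rCheck {a b c a' : R} (h : a * a' = c * c - b * b) :
    rCheck a b c * rCheck a' (-b) c = (a * a') • 1 := by
  ext ⟨i, i'⟩ ⟨j, j'⟩
  cases i <;> cases j <;> cases i' <;> cases j' <;>
    simp [rCheck, Matrix.mul_apply, Fintype.sum_prod_type, h] <;> ring1

lemma yang_baxter {a b c a' b' A B : R} (h₁ : a' * b = B * c + a * b')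
    (h₂ : a' * A = B * b' + a * c) (h₃ : b * A = c * b' + B * a) (s s' : Bool) :
    laxComp (sixVertexLax a' b' c) (sixVertexLax a b c) s s' * rCheck A B c
      = rCheck A B c * laxComp (sixVertexLax a b c) (sixVertexLax a' b' c) s s' := by
  ext ⟨i, i'⟩ ⟨j, j'⟩
  simp only [Matrix.mul_apply, Fintype.sum_prod_type, Fintype.sum_bool, laxComp_apply, rCheck,
    sixVertexLax, Matrix.of_apply]
  cases s <;> cases s' <;> cases i <;> cases j <;> cases i' <;> cases j' <;>
    simp only [↓reduceIte, Prod.swap_prod_mk, Prod.mk.injEq, Bool.true_eq_false,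
      Bool.false_eq_true, and_true, and_false, mul_zero, zero_mul, add_zero, zero_add] <;>
    first
    | ring1
    | linear_combination c * h₁
    | linear_combination -c * h₁
    | linear_combination c * h₂
    | linear_combination -c * h₂
    | linear_combination c * h₃
    | linear_combination -c * h₃

end SixVertexLax

section HyperbolicTransfer

/-- The six-vertex Lax operator in the parametrisation `Δ = -cosh ζ` with spectral parameter `t`. -/
def hyperbolicLax (ζ : ℝ) (t : ℂ) : Bool → Bool → Matrix Bool Bool ℂ :=
  sixVertexLax (sinh (ζ - t)) (sinh t) (sinh ζ)

/-- The transfer matrix of `hyperbolicLax`. -/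
def hyperbolicTransfer (N : ℕ) (ζ : ℝ) (t : ℂ) : Matrix (Fin N → Bool) (Fin N → Bool) ℂ :=
  transferMatrix (hyperbolicLax ζ t) N

lemma hyperbolicTransfer_crossing (N : ℕ) (ζ : ℝ) (t : ℂ) :
    hyperbolicTransfer N ζ (ζ - t) = (hyperbolicTransfer N ζ t)ᵀ := by
  rw [hyperbolicTransfer, hyperbolicTransfer, transferMatrix_transpose]
  refine transferMatrix_eq_of_intertwining pauliX_mul_pauliX pauliX_mul_pauliX (fun s s' => ?_) N
  rw [hyperbolicLax, hyperbolicLax, sub_sub_cancel, sixVertexLax_mul_pauliX]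

lemma hyperbolicTransfer_conjTranspose (N : ℕ) (ζ : ℝ) (t : ℂ) :
    (hyperbolicTransfer N ζ t)ᴴ = hyperbolicTransfer N ζ (ζ - conj t) := by
  suffices h : (hyperbolicTransfer N ζ t).map conj = hyperbolicTransfer N ζ (conj t) by
    rw [hyperbolicTransfer_crossing, ← h]
    rfl
  simp only [hyperbolicTransfer, transferMatrix_map, hyperbolicLax, sixVertexLax_map,
    ← Complex.sinh_conj, map_sub, Complex.conj_ofReal]

lemma hyperbolicTransfer_periodic {N : ℕ} (hN : Even N) (ζ : ℝ) :
    Function.Periodic (hyperbolicTransfer N ζ) (π * I) := by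
  intro t
  have hneg : transferMatrix (fun s s' => (-1 : ℂ) • hyperbolicLax ζ t s s') N
      = hyperbolicTransfer N ζ t := by
    rw [transferMatrix_smul, hN.neg_one_pow, one_smul]
    rfl
  have ha : sinh (ζ - (t + π * I)) = -sinh (ζ - t) := by
    rw [← neg_eq_iff_eq_neg, ← sinh_add_pi_mul_I]
    congr 1
    ring
  rw [← hneg]
  refine transferMatrix_eq_of_intertwining pauliZ_mul_pauliZ pauliZ_mul_pauliZ (fun s s' => ?_) N
  rw [hyperbolicLax, hyperbolicLax, ha, sinh_add_pi_mul_I, sixVertexLax_neg_mul_pauliZ]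

lemma hyperbolicLax_yang_baxter (ζ : ℝ) (u v : ℂ) (s s' : Bool) :
    laxComp (hyperbolicLax ζ v) (hyperbolicLax ζ u) s s'
        * rCheck (sinh (ζ - (u - v))) (sinh (u - v)) (sinh ζ)
      = rCheck (sinh (ζ - (u - v))) (sinh (u - v)) (sinh ζ)
        * laxComp (hyperbolicLax ζ u) (hyperbolicLax ζ v) s s' := by
  apply yang_baxter
  · have h := sinh_sub_mul_sinh_cyclic ζ v u
    rw [← neg_sub u v, ← neg_sub (ζ : ℂ) u, Complex.sinh_neg, Complex.sinh_neg] at h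
    linear_combination h
  · have h := sinh_sub_mul_sinh_cyclic ζ (ζ - (u - v)) v
    rw [sub_sub_cancel, show ζ - (u - v) - v = ζ - u by ring, ← neg_sub (ζ : ℂ) v,
      Complex.sinh_neg] at h
    linear_combination -h
  · have h := sinh_sub_mul_sinh_cyclic ζ (u - v) u
    rw [show u - v - u = -v by ring, ← neg_sub (ζ : ℂ) u, Complex.sinh_neg, Complex.sinh_neg] at h
    linear_combination h

lemma hyperbolicTransfer_commute (N : ℕ) {ζ : ℝ} {u v : ℂ}
    (hne : sinh (ζ - (u - v)) * sinh (ζ + (u - v)) ≠ 0) :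
    Commute (hyperbolicTransfer N ζ u) (hyperbolicTransfer N ζ v) := by
  set r := sinh (ζ - (u - v)) * sinh (ζ + (u - v)) with hr
  have hr' : r = sinh ζ * sinh ζ - sinh (u - v) * sinh (u - v) := by
    rw [hr, sinh_sub_mul_sinh_add, sq, sq]
  have hmul := rCheck_mul_rCheck (hr.symm.trans hr')
  have hmul' := rCheck_mul_rCheck (a := sinh (ζ + (u - v))) (b := -sinh (u - v)) (c := sinh ζ)
    (a' := sinh (ζ - (u - v))) (by rw [mul_comm, ← hr, hr']; ring)
  rw [← hr] at hmul
  rw [mul_comm (sinh _) (sinh _), ← hr, neg_neg] at hmul'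
  rw [Commute, SemiconjBy, hyperbolicTransfer, hyperbolicTransfer, transferMatrix_mul,
    transferMatrix_mul]
  refine (transferMatrix_eq_of_intertwining
    (H := r⁻¹ • rCheck (sinh (ζ + (u - v))) (-sinh (u - v)) (sinh ζ)) ?_ ?_
    (hyperbolicLax_yang_baxter ζ u v) N).symm
  · rw [Matrix.mul_smul, hmul, smul_smul, inv_mul_cancel₀ hne, one_smul]
  · rw [Matrix.smul_mul, hmul', smul_smul, inv_mul_cancel₀ hne, one_smul]

lemma hyperbolicTransfer_commute_of_re_eq (N : ℕ) {ζ : ℝ} (hζ : ζ ≠ 0) {u v : ℂ}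
    (h : u.re = v.re) : Commute (hyperbolicTransfer N ζ u) (hyperbolicTransfer N ζ v) := by
  apply hyperbolicTransfer_commute
  apply mul_ne_zero <;> apply sinh_ne_zero_of_re_ne_zero <;> simp [h, hζ]

end HyperbolicTransfer

section Fusion

variable {R : Type*}

/-- Change of basis of `Bool × Bool` splitting off the one-dimensional invariant quotient of the
product of a six-vertex Lax operator with its crossed partner. The free scale `g` of the last basis
vector makes the fused operator symmetric enough to be unitary. -/
def fusionBasis [Ring R] (g : R) : Matrix (Unit ⊕ Fin 3) (Bool × Bool) R :=
  Matrix.of fun r p => match r, p with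
    | Sum.inl _, (false, false) => 1
    | Sum.inr 0, (true, false) => 1
    | Sum.inr 1, (false, true) => 1
    | Sum.inr 2, (true, true) => g
    | Sum.inr 2, (false, false) => -g
    | _, _ => 0

/-- The inverse of `fusionBasis g`, where `g'` stands for the inverse of `g`. -/
def fusionBasisInv [Ring R] (g' : R) : Matrix (Bool × Bool) (Unit ⊕ Fin 3) R :=
  Matrix.of fun p r => match r, p with
    | Sum.inl _, (false, false) => 1
    | Sum.inl _, (true, true) => 1
    | Sum.inr 0, (true, false) => 1
    | Sum.inr 1, (false, true) => 1
    | Sum.inr 2, (true, true) => g'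
    | _, _ => 0

/-- The fused Lax operator, with three-dimensional (spin one) auxiliary space. -/
def fusedLax [Ring R] (a a' b κ : R) : Bool → Bool → Matrix (Fin 3) (Fin 3) R
  | true, true => !![-a, 0, 0; 0, a', 0; 0, 0, -b]
  | false, false => !![a', 0, 0; 0, -a, 0; 0, 0, -b]
  | false, true => !![0, 0, κ; 0, 0, 0; 0, κ, 0]
  | true, false => !![0, 0, 0; 0, 0, -κ; -κ, 0, 0]

/-- The product of a six-vertex Lax operator with its crossed partner. -/
def crossedProduct [CommRing R] (a a' b c : R) :
    Bool → Bool → Matrix (Bool × Bool) (Bool × Bool) R :=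
  laxComp (sixVertexLax a b c) fun s s' => sixVertexLax a' (-b) c s' s

variable [CommRing R] {a a' b c g g' : R}

lemma fusionBasis_mul_fusionBasisInv (hg : g * g' = 1) :
    fusionBasis g * fusionBasisInv g' = 1 := by
  ext i j
  rcases i with i | i <;> rcases j with j | j <;> try fin_cases i
  all_goals try fin_cases j
  all_goals simp [fusionBasis, fusionBasisInv, Matrix.mul_apply, Fintype.sum_prod_type, hg]

lemma fusionBasisInv_mul_fusionBasis (hg : g * g' = 1) :
    fusionBasisInv g' * fusionBasis g = 1 := by
  rw [mul_comm] at hg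
  ext ⟨i, i'⟩ ⟨j, j'⟩
  cases i <;> cases j <;> cases i' <;> cases j' <;>
    simp [fusionBasis, fusionBasisInv, Matrix.mul_apply, Fin.sum_univ_three, hg]

lemma crossedProduct_toBlocks₁₁ (h : a * a' = c ^ 2 - b ^ 2) (s s' : Bool) :
    (fusionBasis g * crossedProduct a a' b c s s' * fusionBasisInv g').toBlocks₁₁
      = (if s = s' then a * a' else 0) • 1 := by
  ext i j
  simp only [toBlocks₁₁, Matrix.of_apply, Matrix.mul_apply, Fintype.sum_prod_type,
    Fintype.sum_bool, crossedProduct, laxComp_apply]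
  cases s <;> cases s' <;> simp [fusionBasis, fusionBasisInv, sixVertexLax]
  linear_combination -h

lemma crossedProduct_toBlocks₂₁ (h : a * a' = c ^ 2 - b ^ 2) (s s' : Bool) :
    (fusionBasis g * crossedProduct a a' b c s s' * fusionBasisInv g').toBlocks₂₁ = 0 := by
  ext i j
  simp only [toBlocks₂₁, Matrix.of_apply, Matrix.mul_apply, Fintype.sum_prod_type,
    Fintype.sum_bool, crossedProduct, laxComp_apply]
  cases s <;> cases s' <;> fin_cases i <;> simp [fusionBasis, fusionBasisInv, sixVertexLax]
  · linear_combination (-g) * h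
  · ring
  · ring
  · linear_combination g * h

lemma crossedProduct_toBlocks₂₂ (hg : g * g' = 1) (h : a * a' = c ^ 2 - b ^ 2)
    (hb : (a' - a) * g ^ 2 = b) (s s' : Bool) :
    (fusionBasis g * crossedProduct a a' b c s s' * fusionBasisInv g').toBlocks₂₂
      = b • fusedLax a a' b (c * g') s s' := by
  have hb' : g * (a' - a) = b * g' := by
    linear_combination g' * hb - (a' - a) * g * hg
  ext i j
  simp only [toBlocks₂₂, Matrix.of_apply, Matrix.smul_apply, Matrix.mul_apply,
    Fintype.sum_prod_type, Fintype.sum_bool, crossedProduct, laxComp_apply]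
  cases s <;> cases s' <;> fin_cases i <;> fin_cases j <;>
    simp [fusionBasis, fusionBasisInv, sixVertexLax, fusedLax]
  · ring
  · linear_combination (b * b) * hg
  · ring
  · linear_combination c * hb'
  · ring
  · linear_combination (-c) * hb'
  · ring
  · linear_combination (g * g') * h - b ^ 2 * hg

lemma transferMatrix_mul_crossed (hg : g * g' = 1) (h : a * a' = c ^ 2 - b ^ 2)
    (hb : (a' - a) * g ^ 2 = b) (N : ℕ) :
    transferMatrix (sixVertexLax a b c) N
        * transferMatrix (fun s s' => sixVertexLax a' (-b) c s' s) N
      = (a * a') ^ N • 1 + b ^ N • transferMatrix (fusedLax a a' b (c * g')) N := by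
  have hHG := fusionBasisInv_mul_fusionBasis hg
  have hconj : transferMatrix
      (fun s s' => fusionBasis g * crossedProduct a a' b c s s' * fusionBasisInv g') N
      = transferMatrix (crossedProduct a a' b c) N :=
    transferMatrix_eq_of_intertwining (fusionBasis_mul_fusionBasisInv hg) hHG
      (fun s s' => by rw [Matrix.mul_assoc, hHG, Matrix.mul_one]) N
  rw [transferMatrix_mul]
  change transferMatrix (crossedProduct a a' b c) N = _
  rw [← hconj, transferMatrix_blockTriangular (crossedProduct_toBlocks₂₁ h)]
  simp only [crossedProduct_toBlocks₁₁ h, crossedProduct_toBlocks₂₂ hg h hb,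
    transferMatrix_diagonal, transferMatrix_smul, Fintype.card_unit, Nat.cast_one, one_mul]

end Fusion

section Unitarity

variable {R : Type*} [CommRing R] [StarRing R]

lemma isScaledUnitary_sixVertexLax {a b c : R} (hb : star b = -b) (hc : star c = c)
    (h : a * star a = b * star b + c ^ 2) :
    IsScaledUnitary (sixVertexLax a b c) (a * star a) := by
  intro s s'
  ext i j
  simp only [Matrix.sum_apply, Matrix.mul_apply, conjTranspose_apply, Fintype.sum_bool]
  cases s <;> cases s' <;> cases i <;> cases j <;>
    simp [sixVertexLax, hb, hc, h] <;> ring1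

lemma isScaledUnitary_fusedLax {a a' b κ : R} (hb : star a' = -b) (hκ : star κ = κ)
    (h : a * star a = a' * star a' + κ ^ 2) :
    IsScaledUnitary (fusedLax a a' b κ) (a * star a) := by
  have hb' : star b = -a' := by rw [← neg_eq_iff_eq_neg, ← star_neg, ← hb, star_star]
  intro s s'
  ext i j
  simp only [Matrix.sum_apply, Matrix.mul_apply, conjTranspose_apply, Fintype.sum_bool,
    Fin.sum_univ_three]
  cases s <;> cases s' <;> fin_cases i <;> fin_cases j <;>
    simp [fusedLax, hb, hb', hκ, h] <;> ring1

end Unitarity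

section HyperbolicFusion

/-- The fused Lax operator arising from `hyperbolicLax`. -/
def hyperbolicFusedLax (ζ : ℝ) (t : ℂ) : Bool → Bool → Matrix (Fin 3) (Fin 3) ℂ :=
  fusedLax (sinh (ζ - t)) (sinh (ζ + t)) (sinh t) (sinh ζ * (√(2 * Real.cosh ζ) : ℝ))

lemma ofReal_sqrt_two_mul_cosh_sq (ζ : ℝ) :
    ((√(2 * Real.cosh ζ) : ℝ) : ℂ) ^ 2 = 2 * cosh ζ := by
  rw [← Complex.ofReal_pow, Real.sq_sqrt (by have := Real.cosh_pos ζ; positivity)]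
  push_cast
  rfl

lemma hyperbolicTransfer_fusion (N : ℕ) (ζ : ℝ) (t : ℂ) :
    hyperbolicTransfer N ζ t * hyperbolicTransfer N ζ (ζ + t)
      = (sinh (ζ - t) * sinh (ζ + t)) ^ N • 1
        + sinh t ^ N • transferMatrix (hyperbolicFusedLax ζ t) N := by
  have hcrossed : hyperbolicTransfer N ζ (ζ + t)
      = transferMatrix (fun s s' => sixVertexLax (sinh (ζ + t)) (-sinh t) (sinh ζ) s' s) N := by
    rw [← sub_neg_eq_add, hyperbolicTransfer_crossing, hyperbolicTransfer,
      transferMatrix_transpose, hyperbolicLax, Complex.sinh_neg]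
  have hcosh : 2 * cosh ζ ≠ 0 := by
    rw [← Complex.ofReal_cosh]
    exact_mod_cast (mul_pos two_pos (Real.cosh_pos ζ)).ne'
  have hsq := ofReal_sqrt_two_mul_cosh_sq ζ
  have hsqrt : ((√(2 * Real.cosh ζ) : ℝ) : ℂ) ≠ 0 := by
    intro h0
    rw [h0, zero_pow two_ne_zero] at hsq
    exact hcosh hsq.symm
  rw [hcrossed]
  refine transferMatrix_mul_crossed (inv_mul_cancel₀ hsqrt) (sinh_sub_mul_sinh_add _ _) ?_ N
  rw [inv_pow, hsq, mul_inv_eq_iff_eq_mul₀ hcosh, Complex.sinh_sub, Complex.sinh_add]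
  ring

lemma isScaledUnitary_hyperbolicLax (ζ : ℝ) {t : ℂ} (ht : t.re = 0) :
    IsScaledUnitary (hyperbolicLax ζ t) ((‖sinh (ζ - t)‖ : ℂ) ^ 2) := by
  have hconj : conj t = -t := by apply Complex.ext <;> simp [ht]
  have hb : star (sinh t) = -sinh t := by
    rw [Complex.star_def, ← Complex.sinh_conj, hconj, Complex.sinh_neg]
  have ha : star (sinh (ζ - t)) = sinh (ζ + t) := by
    rw [Complex.star_def, ← Complex.sinh_conj, map_sub, hconj, Complex.conj_ofReal, sub_neg_eq_add]
  rw [← Complex.mul_conj']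
  refine isScaledUnitary_sixVertexLax hb ?_ ?_
  · rw [Complex.star_def, ← Complex.sinh_conj, Complex.conj_ofReal]
  · rw [ha, hb, sinh_sub_mul_sinh_add]
    ring

lemma isScaledUnitary_hyperbolicFusedLax (ζ : ℝ) {t : ℂ} (ht : t.re = -ζ / 2) :
    IsScaledUnitary (hyperbolicFusedLax ζ t) ((‖sinh (ζ - t)‖ : ℂ) ^ 2) := by
  have hconj : conj t = -ζ - t := by
    apply Complex.ext
    · simp only [Complex.conj_re, Complex.sub_re, Complex.neg_re, Complex.ofReal_re, ht]
      ring
    · simp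
  have ha' : star (sinh (ζ + t)) = -sinh t := by
    rw [Complex.star_def, ← Complex.sinh_conj, ← Complex.sinh_neg, map_add, hconj,
      Complex.conj_ofReal]
    congr 1
    ring
  have ha : star (sinh (ζ - t)) = sinh (2 * ζ + t) := by
    rw [Complex.star_def, ← Complex.sinh_conj, map_sub, hconj, Complex.conj_ofReal]
    congr 1
    ring
  rw [← Complex.mul_conj']
  refine isScaledUnitary_fusedLax ha' ?_ ?_
  · rw [Complex.star_def, map_mul, ← Complex.sinh_conj, Complex.conj_ofReal, Complex.conj_ofReal]
  · have h := sinh_sub_mul_sinh_cyclic (2 * ζ) (ζ - t) (-t)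
    rw [show 2 * (ζ : ℂ) - (ζ - t) = ζ + t by ring, show (ζ : ℂ) - t - -t = ζ by ring,
      show -t - 2 * (ζ : ℂ) = -(2 * ζ + t) by ring, Complex.sinh_neg, Complex.sinh_neg,
      Complex.sinh_two_mul] at h
    rw [ha, ha', mul_pow, ofReal_sqrt_two_mul_cosh_sq]
    linear_combination -h

end HyperbolicFusion

section SimultaneousDiagonalization

open scoped Function in
lemma exists_orthonormalBasis_forall_apply_eq_smul {𝕜 E ι n : Type*} [RCLike 𝕜]
    [NormedAddCommGroup E] [InnerProductSpace 𝕜 E] [FiniteDimensional 𝕜 E] [Fintype n]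
    (hn : Module.finrank 𝕜 E = Fintype.card n) {T : ι → E →ₗ[𝕜] E}
    (hT : ∀ i, (T i).IsSymmetric) (hcomm : Pairwise (Commute on T)) :
    ∃ (b : OrthonormalBasis n 𝕜 E) (d : ι → n → 𝕜), ∀ i j, T i (b j) = d i j • b j := by
  classical
  let V : (ι → 𝕜) → Submodule 𝕜 E := fun γ => ⨅ i, Module.End.eigenspace (T i) (γ i)
  have horth := LinearMap.IsSymmetric.orthogonalFamily_iInf_eigenspaces hT
  have horth' := horth.comp (Subtype.val_injective (p := fun γ => V γ ≠ ⊥))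
  have : Finite {γ // V γ ≠ ⊥} :=
    WellFoundedGT.finite_of_iSupIndep (iSupIndep_ne_bot.mpr horth.independent) Subtype.prop
  have : Fintype {γ // V γ ≠ ⊥} := Fintype.ofFinite _
  have hinternal : DirectSum.IsInternal fun γ : {γ // V γ ≠ ⊥} => V γ := by
    rw [OrthogonalFamily.isInternal_iff horth', Submodule.orthogonal_eq_bot_iff,
      ← LinearMap.IsSymmetric.iSup_iInf_eq_top_of_commute hT hcomm]
    exact iSup_ne_bot_subtype V
  let b := (hinternal.subordinateOrthonormalBasis hn horth').reindex (Fintype.equivFin n).symm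
  have hb : ∀ j, ∃ γ : ι → 𝕜, b j ∈ V γ := fun j => ⟨_, by
    rw [OrthonormalBasis.reindex_apply]
    exact hinternal.subordinateOrthonormalBasis_subordinate hn _ horth'⟩
  choose γ hγ using hb
  exact ⟨b, fun i j => γ j i, fun i j =>
    Module.End.mem_eigenspace_iff.1 ((Submodule.mem_iInf _).1 (hγ j) i)⟩

variable {n ι : Type*} [Fintype n] [DecidableEq n]

lemma exists_unitary_mul_eq_mul_diagonal {H : ι → Matrix n n ℂ} (hH : ∀ i, (H i).IsHermitian)
    (hcomm : ∀ i j, Commute (H i) (H j)) :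
    ∃ U ∈ unitaryGroup n ℂ, ∃ d : ι → n → ℂ, ∀ i, H i * U = U * diagonal (d i) := by
  let T : ι → EuclideanSpace ℂ n →ₗ[ℂ] EuclideanSpace ℂ n := fun i => toEuclideanLin (H i)
  have hTcomm : ∀ i j, Commute (T i) (T j) := fun i j =>
    LinearMap.ext fun v => WithLp.ofLp_injective 2 <| by
      simp only [T, Module.End.mul_apply, ofLp_toLpLin, toLin'_apply, mulVec_mulVec,
        (hcomm i j).eq]
  obtain ⟨b, d, hbd⟩ := exists_orthonormalBasis_forall_apply_eq_smul finrank_euclideanSpace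
    (fun i => isSymmetric_toEuclideanLin_iff.mpr (hH i)) (T := T) (fun i j _ => hTcomm i j)
  refine ⟨of fun σ j => b j σ, ?_, d, fun i => ?_⟩
  · rw [mem_unitaryGroup_iff']
    ext i j
    have horth := orthonormal_iff_ite.1 b.orthonormal i j
    rw [one_apply, ← horth, PiLp.inner_apply]
    simp [mul_apply, star_eq_conjTranspose, mul_comm]
  · ext σ j
    have hentry := congrArg (fun v => v.ofLp σ) (hbd i j)
    simp only [T, ofLp_toLpLin, toLin'_apply] at hentry
    rw [mul_diagonal]
    simpa [mul_apply, mulVec, dotProduct, mul_comm] using hentry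

lemma trace_pow_of_mul_eq_mul_diagonal {R : Type*} [CommRing R] [StarRing R] {T U : Matrix n n R}
    {d : n → R} (hU : U ∈ unitaryGroup n R) (h : T * U = U * diagonal d) (M : ℕ) :
    (T ^ M).trace = ∑ j, d j ^ M := by
  have hpow : T ^ M * U = U * diagonal (d ^ M) := by
    rw [← diagonal_pow]
    exact (show SemiconjBy U (diagonal d) T from h.symm).pow_right M |>.eq.symm
  calc (T ^ M).trace = (T ^ M * (U * star U)).trace := by
        rw [mem_unitaryGroup_iff.1 hU, Matrix.mul_one]
    _ = (star U * (U * diagonal (d ^ M))).trace := by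
        rw [← Matrix.mul_assoc, hpow, Matrix.trace_mul_comm]
    _ = ∑ j, d j ^ M := by
        rw [← Matrix.mul_assoc, mem_unitaryGroup_iff'.1 hU, Matrix.one_mul, trace_diagonal]
        rfl

lemma eq_zero_of_forall_re_eq {f : ℂ → ℂ} (hf : Differentiable ℂ f) {x : ℝ}
    (h : ∀ z : ℂ, z.re = x → f z = 0) (z : ℂ) : f z = 0 := by
  have hline : Tendsto (fun s : ℝ => (x : ℂ) + s * I) (𝓝[≠] 0) (𝓝[≠] (x : ℂ)) := by
    refine tendsto_nhdsWithin_of_tendsto_nhds_of_eventually_within _ ?_ ?_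
    · have hcont : Continuous fun s : ℝ => (x : ℂ) + s * I := by fun_prop
      simpa using (hcont.tendsto 0).mono_left nhdsWithin_le_nhds
    · filter_upwards [self_mem_nhdsWithin] with s hs
      simpa using hs
  have hanalytic : AnalyticOnNhd ℂ f Set.univ := fun z _ => hf.analyticAt z
  exact hanalytic.eqOn_zero_of_preconnected_of_frequently_eq_zero isPreconnected_univ
    (Set.mem_univ (x : ℂ)) (hline.frequently (Frequently.of_forall fun s => h _ (by simp)))
    (Set.mem_univ z)

lemma exists_unitary_mul_eq_mul_diagonal_of_entire {T : ℂ → Matrix n n ℂ}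
    (hT : ∀ i j, Differentiable ℂ fun t => T t i j) {x : ℝ}
    (hherm : ∀ t : ℂ, t.re = x → (T t).IsHermitian)
    (hcomm : ∀ t u : ℂ, t.re = x → u.re = x → Commute (T t) (T u)) :
    ∃ U ∈ unitaryGroup n ℂ, ∃ Λ : n → ℂ → ℂ, ∀ t, T t * U = U * diagonal fun j => Λ j t := by
  obtain ⟨U, hU, d, hd⟩ := exists_unitary_mul_eq_mul_diagonal
    (H := fun t : {t : ℂ // t.re = x} => T t) (fun t => hherm t t.2)
    (fun t u => hcomm t u t.2 u.2)
  refine ⟨U, hU, fun j t => (star U * T t * U) j j, fun t => ?_⟩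
  have hoff : ∀ i j, i ≠ j → (star U * T t * U) i j = 0 := by
    intro i j hij
    refine eq_zero_of_forall_re_eq (f := fun t => (star U * T t * U) i j) ?_ (x := x) ?_ t
    · simp only [Matrix.mul_apply]
      fun_prop
    · intro u hu
      have hdiag : T u * U = U * diagonal (d ⟨u, hu⟩) := hd ⟨u, hu⟩
      rw [Matrix.mul_assoc, hdiag, ← Matrix.mul_assoc, mem_unitaryGroup_iff'.1 hU, Matrix.one_mul,
        diagonal_apply_ne _ hij]
  have hdiag : star U * T t * U = diagonal fun j => (star U * T t * U) j j := by
    ext i j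
    rcases eq_or_ne i j with rfl | hij
    · rw [diagonal_apply_eq]
    · rw [hoff i j hij, diagonal_apply_ne _ hij]
  rw [← hdiag, ← Matrix.mul_assoc, ← Matrix.mul_assoc, mem_unitaryGroup_iff.1 hU, Matrix.one_mul]

end SimultaneousDiagonalization

section UnitVectors

variable {n : Type*} [Fintype n]

lemma star_dotProduct_self (v : n → ℂ) : star v ⬝ᵥ v = ((∑ i, ‖v i‖ ^ 2 : ℝ) : ℂ) := by
  push_cast
  exact Finset.sum_congr rfl fun i _ => Complex.conj_mul' (v i)

lemma sum_norm_sq_eq_one {v : n → ℂ} (hv : star v ⬝ᵥ v = 1) : ∑ i, ‖v i‖ ^ 2 = 1 := by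
  rw [star_dotProduct_self] at hv
  exact_mod_cast hv

lemma norm_apply_le_one {v : n → ℂ} (hv : star v ⬝ᵥ v = 1) (i : n) : ‖v i‖ ≤ 1 := by
  have hle : ‖v i‖ ^ 2 ≤ 1 := by
    rw [← sum_norm_sq_eq_one hv]
    exact Finset.single_le_sum (f := fun i => ‖v i‖ ^ 2) (fun i _ => by positivity)
      (Finset.mem_univ i)
  exact (sq_le_one_iff₀ (norm_nonneg _)).1 hle

lemma exists_inv_card_le_norm_sq {v : n → ℂ} (hv : star v ⬝ᵥ v = 1) :
    ∃ i, (Fintype.card n : ℝ)⁻¹ ≤ ‖v i‖ ^ 2 := by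
  by_contra! hlt
  have hsum := sum_norm_sq_eq_one hv
  have hne : (Finset.univ : Finset n).Nonempty := by
    by_contra hempty
    simp [Finset.not_nonempty_iff_eq_empty.1 hempty] at hsum
  have hsum_lt := Finset.sum_lt_sum_of_nonempty hne fun i _ => hlt i
  have hcard : (Fintype.card n : ℝ) ≠ 0 := by
    exact_mod_cast (Finset.card_pos.2 hne).ne'
  rw [hsum, Finset.sum_const, Finset.card_univ, nsmul_eq_mul, mul_inv_cancel₀ hcard] at hsum_lt
  exact lt_irrefl _ hsum_lt

variable [DecidableEq n]

lemma star_mulVec_dotProduct_mulVec {U : Matrix n n ℂ} (hU : U ∈ unitaryGroup n ℂ) (v : n → ℂ) :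
    star (star U *ᵥ v) ⬝ᵥ (star U *ᵥ v) = star v ⬝ᵥ v := by
  rw [star_mulVec, star_eq_conjTranspose, conjTranspose_conjTranspose, ← dotProduct_mulVec,
    mulVec_mulVec, ← star_eq_conjTranspose, mem_unitaryGroup_iff.1 hU, one_mulVec]

lemma norm_star_dotProduct_mulVec_le {B : Type*} [Fintype B] {M : B → Matrix n n ℂ} {r : ℝ}
    (hr : 0 ≤ r) (hM : ∑ β, M β * (M β)ᴴ = (r : ℂ) ^ 2 • 1) {v : n → ℂ} (hv : star v ⬝ᵥ v = 1)
    (β : B) : ‖star v ⬝ᵥ (M β *ᵥ v)‖ ≤ r := by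
  let u : B → n → ℂ := fun β => (M β)ᴴ *ᵥ v
  have hu : ∑ β, ∑ i, ‖u β i‖ ^ 2 = r ^ 2 := by
    have hsum : ∑ β, star (u β) ⬝ᵥ u β = (r : ℂ) ^ 2 := by
      simp only [u, star_mulVec, conjTranspose_conjTranspose, ← dotProduct_mulVec, mulVec_mulVec]
      rw [← dotProduct_sum, ← sum_mulVec, hM, smul_mulVec, one_mulVec, dotProduct_smul, hv,
        smul_eq_mul, mul_one]
    simp only [star_dotProduct_self] at hsum
    exact_mod_cast hsum
  have hβ : ∑ i, ‖u β i‖ ^ 2 ≤ r ^ 2 := by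
    rw [← hu]
    exact Finset.single_le_sum (f := fun β => ∑ i, ‖u β i‖ ^ 2) (fun β _ => by positivity)
      (Finset.mem_univ β)
  have hCS := Finset.sum_mul_sq_le_sq_mul_sq Finset.univ (fun i => ‖u β i‖) (fun i => ‖v i‖)
  rw [sum_norm_sq_eq_one hv, mul_one] at hCS
  calc ‖star v ⬝ᵥ (M β *ᵥ v)‖ = ‖∑ i, star (u β) i * v i‖ := by
        rw [dotProduct_mulVec, ← conjTranspose_conjTranspose (M β), ← star_mulVec]
        rfl
    _ ≤ ∑ i, ‖u β i‖ * ‖v i‖ := norm_sum_le_of_le _ fun i _ => by simp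
    _ ≤ r := le_of_sq_le_sq (hCS.trans hβ) hr

end UnitVectors

section TransferAnalysis

variable {S A : Type*} [Fintype A] [DecidableEq A]

lemma norm_star_dotProduct_transferMatrix_mulVec_le [Fintype S] [DecidableEq S]
    {L : S → S → Matrix A A ℂ} {r : ℝ} (hr : 0 ≤ r) (hL : IsScaledUnitary L ((r : ℂ) ^ 2)) {N : ℕ}
    {v : (Fin N → S) → ℂ} (hv : star v ⬝ᵥ v = 1) :
    ‖star v ⬝ᵥ (transferMatrix L N *ᵥ v)‖ ≤ Fintype.card A * r ^ N := by
  let M : A → A → Matrix (Fin N → S) (Fin N → S) ℂ :=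
    fun α β => of fun σ τ => monodromy L σ τ α β
  have hM : ∀ α, ∑ β, M α β * (M α β)ᴴ = ((r ^ N : ℝ) : ℂ) ^ 2 • 1 := by
    intro α
    ext σ σ'
    have hentry := congrFun (congrFun (hL.monodromy N σ σ') α) α
    rw [Matrix.smul_apply, one_apply_eq, smul_eq_mul, mul_one] at hentry
    rw [Matrix.smul_apply, one_apply, smul_eq_mul, mul_ite, mul_one, mul_zero,
      Complex.ofReal_pow, pow_right_comm, ← hentry]
    simp only [Matrix.sum_apply, mul_apply, M, of_apply, conjTranspose_apply]
    exact Finset.sum_comm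
  have htrace : transferMatrix L N = ∑ α, M α α := by
    ext σ τ
    simp [transferMatrix, trace, M, Matrix.sum_apply]
  calc ‖star v ⬝ᵥ (transferMatrix L N *ᵥ v)‖ = ‖∑ α, star v ⬝ᵥ (M α α *ᵥ v)‖ := by
        rw [htrace, sum_mulVec, dotProduct_sum]
    _ ≤ ∑ _α : A, r ^ N := norm_sum_le_of_le _ fun α _ =>
        norm_star_dotProduct_mulVec_le (by positivity) (hM α) hv α
    _ = Fintype.card A * r ^ N := by simp

variable {𝕜 E R : Type*} [NontriviallyNormedField 𝕜] [NormedAddCommGroup E] [NormedSpace 𝕜 E]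
  [NormedCommRing R] [NormedAlgebra 𝕜 R] {L : E → S → S → Matrix A A R}

lemma differentiable_monodromy (hL : ∀ s s' i j, Differentiable 𝕜 fun x => L x s s' i j) {N : ℕ}
    (σ τ : Fin N → S) (i j : A) : Differentiable 𝕜 fun x => monodromy (L x) σ τ i j := by
  induction N generalizing i j with
  | zero =>
    simp only [monodromy_zero]
    fun_prop
  | succ N ih =>
    simp only [monodromy_succ, mul_apply]
    have htail := ih (Fin.tail σ) (Fin.tail τ)
    fun_prop

lemma differentiable_transferMatrix (hL : ∀ s s' i j, Differentiable 𝕜 fun x => L x s s' i j)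
    {N : ℕ} (σ τ : Fin N → S) : Differentiable 𝕜 fun x => transferMatrix (L x) N σ τ := by
  simp only [transferMatrix, of_apply, trace, diag]
  have hmono := differentiable_monodromy hL σ τ
  fun_prop

lemma differentiable_sixVertexLax {a b c : E → R} (ha : Differentiable 𝕜 a)
    (hb : Differentiable 𝕜 b) (hc : Differentiable 𝕜 c) (s s' h h' : Bool) :
    Differentiable 𝕜 fun x => sixVertexLax (a x) (b x) (c x) s s' h h' := by
  simp only [sixVertexLax, of_apply]
  split_ifs <;> first | assumption | exact differentiable_const _

lemma differentiable_hyperbolicTransfer {N : ℕ} (ζ : ℝ) (σ τ : Fin N → Bool) :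
    Differentiable ℂ fun t => hyperbolicTransfer N ζ t σ τ :=
  differentiable_transferMatrix
    (differentiable_sixVertexLax (by fun_prop) (by fun_prop) (by fun_prop)) σ τ

lemma continuous_hyperbolicTransfer (N : ℕ) :
    Continuous fun p : ℝ × ℂ => hyperbolicTransfer N p.1 p.2 :=
  continuous_matrix fun σ τ => (differentiable_transferMatrix (𝕜 := ℝ)
    (L := fun p : ℝ × ℂ => hyperbolicLax p.1 p.2)
    (differentiable_sixVertexLax (by fun_prop) (by fun_prop) (by fun_prop)) σ τ).continuous

end TransferAnalysis

section Strip

lemma norm_le_of_norm_le_on_edges {f : ℂ → ℂ} {a b C D : ℝ} (hab : a < b)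
    (hf : DifferentiableOn ℂ f (verticalClosedStrip a b))
    (hD : ∀ z ∈ verticalClosedStrip a b, 1 ≤ |z.im| → ‖f z‖ ≤ D)
    (ha : ∀ z : ℂ, z.re = a → ‖f z‖ ≤ C) (hb : ∀ z : ℂ, z.re = b → ‖f z‖ ≤ C)
    {z : ℂ} (hz : z ∈ verticalClosedStrip a b) : ‖f z‖ ≤ C := by
  refine PhragmenLindelof.vertical_strip ?_ ⟨0, div_pos Real.pi_pos (sub_pos.2 hab), 0, ?_⟩
    ha hb hz.1 hz.2
  · refine (hf.mono (closure_minimal ?_ (isClosed_Icc.preimage Complex.continuous_re))).diffContOnCl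
    exact Set.preimage_mono Set.Ioo_subset_Icc_self
  · refine Asymptotics.IsBigO.of_bound D ?_
    rw [eventually_inf_principal]
    filter_upwards [(eventually_ge_atTop (1 : ℝ)).comap (abs ∘ Complex.im)] with w him hre
    simpa using hD w ⟨hre.1.le, hre.2.le⟩ him

lemma exists_int_abs_im_add_le (t : ℂ) :
    ∃ n : ℤ, |(t + n * (π * I)).im| ≤ π / 2 ∧ (t + n * (π * I)).re = t.re := by
  refine ⟨-round (t.im / π), ?_, by simp⟩
  have him : (t + ((-round (t.im / π) : ℤ) : ℂ) * (π * I)).im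
      = π * (t.im / π - round (t.im / π)) := by
    rw [mul_sub, mul_div_cancel₀ _ Real.pi_ne_zero]
    simp [sub_eq_add_neg, mul_comm]
  rw [him, abs_mul, abs_of_pos Real.pi_pos]
  have hround := abs_sub_round (t.im / π)
  nlinarith [Real.pi_pos]

variable {f : ℂ → ℂ} (hf : Function.Periodic f (π * I)) {a b : ℝ}
include hf

lemma periodic_forall_mem_verticalClosedStrip {p : ℂ → Prop}
    (h : ∀ t ∈ verticalClosedStrip a b, |t.im| ≤ π / 2 → p (f t)) {t : ℂ}
    (ht : t ∈ verticalClosedStrip a b) : p (f t) := by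
  obtain ⟨n, him, hre⟩ := exists_int_abs_im_add_le t
  rw [← hf.int_mul n t]
  refine h _ ?_ him
  rwa [verticalClosedStrip, Set.mem_preimage, hre]

lemma periodic_exists_norm_le (hc : ContinuousOn f (verticalClosedStrip a b)) :
    ∃ D, ∀ t ∈ verticalClosedStrip a b, ‖f t‖ ≤ D := by
  have hK : IsCompact (Set.Icc a b ×ℂ Set.Icc (-(π / 2)) (π / 2)) :=
    isCompact_Icc.reProdIm isCompact_Icc
  obtain ⟨D, hD⟩ := hK.exists_bound_of_continuousOn (hc.mono fun t ht => ht.1)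
  refine ⟨D, fun t ht => periodic_forall_mem_verticalClosedStrip hf (p := fun z => ‖z‖ ≤ D) ?_ ht⟩
  exact fun u hu him => hD u ⟨hu, abs_le.1 him⟩

end Strip

section SchwarzLemma

lemma norm_sin_sq (w : ℂ) : ‖Complex.sin w‖ ^ 2 = Real.sinh w.im ^ 2 + Real.sin w.re ^ 2 := by
  have hrot : ‖Complex.sin w‖ = ‖sinh (w * I)‖ := by rw [Complex.sinh_mul_I]; simp
  rw [hrot, norm_sinh_sq]
  simp

lemma norm_cos_sq (w : ℂ) : ‖Complex.cos w‖ ^ 2 = Real.sinh w.im ^ 2 + Real.cos w.re ^ 2 := by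
  rw [← Complex.sin_pi_div_two_sub, norm_sin_sq, ← Real.sin_pi_div_two_sub]
  simp [← Complex.ofReal_ofNat, ← Complex.ofReal_div]

lemma norm_sin_eq_norm_cos {w : ℂ} (hw : |w.re| = π / 4) :
    ‖Complex.sin w‖ = ‖Complex.cos w‖ := by
  rw [← pow_left_inj₀ (norm_nonneg _) (norm_nonneg _) two_ne_zero, norm_sin_sq, norm_cos_sq,
    ← sq_abs (Real.sin _), Real.abs_sin_eq_sin_abs_of_abs_le_pi (by linarith [Real.pi_pos]),
    ← Real.cos_abs, hw, Real.sin_pi_div_four, Real.cos_pi_div_four]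

lemma cos_ne_zero_of_abs_re_le {w : ℂ} (hw : |w.re| ≤ π / 4) : Complex.cos w ≠ 0 := by
  intro h0
  have hnorm := norm_cos_sq w
  have hpos : 0 < Real.cos w.re := Real.cos_pos_of_mem_Ioo
    ⟨by linarith [(abs_le.1 hw).1, Real.pi_pos], by linarith [(abs_le.1 hw).2, Real.pi_pos]⟩
  rw [h0, norm_zero] at hnorm
  nlinarith [sq_nonneg (Real.sinh w.im)]

lemma sin_ne_zero_of_abs_re_le {w : ℂ} (hw : |w.re| ≤ π / 4) (h0 : w ≠ 0) :
    Complex.sin w ≠ 0 := by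
  intro hsin
  have hnorm := norm_sin_sq w
  rw [hsin, norm_zero] at hnorm
  have him : w.im = 0 := by
    rw [← Real.sinh_eq_zero]
    nlinarith [sq_nonneg (Real.sinh w.im), sq_nonneg (Real.sin w.re)]
  have hre : w.re = 0 := by
    rw [← Real.sin_eq_zero_iff_of_lt_of_lt (by linarith [(abs_le.1 hw).1, Real.pi_pos])
      (by linarith [(abs_le.1 hw).2, Real.pi_pos])]
    nlinarith [sq_nonneg (Real.sinh w.im), sq_nonneg (Real.sin w.re)]
  exact h0 (Complex.ext hre him)

lemma norm_cos_le_mul_norm_sin {w : ℂ} {y : ℝ} (hy : 0 < y) (hw : y ≤ |w.im|) :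
    ‖Complex.cos w‖ ≤ (1 + 1 / Real.sinh y) * ‖Complex.sin w‖ := by
  have hpos : 0 < Real.sinh y := Real.sinh_pos_iff.2 hy
  have hsinh : Real.sinh y ^ 2 ≤ Real.sinh w.im ^ 2 := by
    rw [← sq_abs (Real.sinh w.im), Real.abs_sinh]
    have := Real.sinh_le_sinh.2 hw
    gcongr
  have hsin : Real.sinh y ≤ ‖Complex.sin w‖ :=
    le_of_sq_le_sq (by rw [norm_sin_sq]; nlinarith [sq_nonneg (Real.sin w.re)]) (norm_nonneg _)
  have hcos : ‖Complex.cos w‖ ≤ ‖Complex.sin w‖ + 1 := by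
    refine le_of_sq_le_sq ?_ (by positivity)
    rw [add_sq, norm_sin_sq, norm_cos_sq]
    nlinarith [Real.cos_sq_le_one w.re, sq_nonneg (Real.sin w.re), norm_nonneg (Complex.sin w)]
  calc ‖Complex.cos w‖ ≤ ‖Complex.sin w‖ + 1 := hcos
    _ ≤ ‖Complex.sin w‖ + 1 / Real.sinh y * ‖Complex.sin w‖ := by
        rw [one_div_mul_eq_div]
        gcongr
        rwa [one_le_div hpos]
    _ = (1 + 1 / Real.sinh y) * ‖Complex.sin w‖ := by ring

lemma differentiable_dslope {f : ℂ → ℂ} (hf : Differentiable ℂ f) (c : ℂ) :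
    Differentiable ℂ (dslope f c) :=
  differentiableOn_univ.1 ((Complex.differentiableOn_dslope univ_mem).2 hf.differentiableOn)

lemma mul_dslope_zero {f : ℂ → ℂ} (hf : f 0 = 0) (t : ℂ) : t * dslope f 0 t = f t := by
  simpa [hf] using sub_smul_dslope f 0 t

lemma dslope_sin_ne_zero {p : ℝ} (hp : p ≠ 0) {t : ℂ} (ht : |p * t.re| ≤ π / 4) :
    dslope (fun t : ℂ => Complex.sin (p * t)) 0 t ≠ 0 := by
  have hp' : (p : ℂ) ≠ 0 := Complex.ofReal_ne_zero.2 hp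
  rcases eq_or_ne t 0 with rfl | h0
  · have hderiv : HasDerivAt (fun t : ℂ => Complex.sin (p * t)) p 0 := by
      simpa using ((hasDerivAt_id (0 : ℂ)).const_mul (p : ℂ)).csin
    rwa [dslope_same, hderiv.deriv]
  · have hsin : Complex.sin (p * t) ≠ 0 :=
      sin_ne_zero_of_abs_re_le (by simpa using ht) (mul_ne_zero hp' h0)
    rw [← mul_dslope_zero (f := fun t : ℂ => Complex.sin (p * t)) (by simp) t] at hsin
    exact right_ne_zero_of_mul hsin

variable {h C D p : ℝ} {N : ℕ} {g : ℂ → ℂ}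

lemma exists_pow_mul_eq_mul_tan_pow (hp : p ≠ 0) (hph : |p| * h ≤ π / 4)
    (hg : DifferentiableOn ℂ g (verticalClosedStrip (-h) h)) (N : ℕ) :
    ∃ G : ℂ → ℂ, DifferentiableOn ℂ G (verticalClosedStrip (-h) h) ∧
      ∀ t ∈ verticalClosedStrip (-h) h, t ^ N * g t = G t * Complex.tan (p * t) ^ N := by
  let Q : ℂ → ℂ := fun t => Complex.sin (p * t)
  have hre : ∀ t ∈ verticalClosedStrip (-h) h, |p * t.re| ≤ π / 4 := fun t ht => by
    rw [abs_mul]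
    exact (mul_le_mul_of_nonneg_left (abs_le.2 ht) (abs_nonneg p)).trans hph
  have hQ : ∀ t ∈ verticalClosedStrip (-h) h, dslope Q 0 t ≠ 0 := fun t ht =>
    dslope_sin_ne_zero hp (hre t ht)
  have hQd : Differentiable ℂ (dslope Q 0) := differentiable_dslope (by fun_prop) 0
  refine ⟨fun t => (Complex.cos (p * t) / dslope Q 0 t) ^ N * g t, ?_, fun t ht => ?_⟩
  · refine (DifferentiableOn.pow (DifferentiableOn.div ?_ hQd.differentiableOn hQ) N).mul hg
    exact Differentiable.differentiableOn (by fun_prop)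
  · have hcos : Complex.cos (p * t) ≠ 0 :=
      cos_ne_zero_of_abs_re_le (by simpa using hre t ht)
    have hsin : Complex.sin (p * t) = t * dslope Q 0 t :=
      (mul_dslope_zero (f := Q) (by simp [Q]) t).symm
    rw [Complex.tan_eq_sin_div_cos, hsin, mul_right_comm, ← mul_pow,
      div_mul_div_cancel₀' hcos, mul_div_cancel_right₀ _ (hQ t ht)]

-- `t ↦ tan (π t / (4 h))` maps the strip conformally onto the unit disc and fixes the zero `0`, so
-- this is the Schwarz lemma; the quotient by `tan ^ N` has a removable singularity.
lemma norm_pow_mul_le_mul_norm_tan_pow (hh : 0 < h)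
    (hg : DifferentiableOn ℂ g (verticalClosedStrip (-h) h))
    (hD : ∀ t ∈ verticalClosedStrip (-h) h, ‖t ^ N * g t‖ ≤ D)
    (hC : ∀ t : ℂ, |t.re| = h → ‖t ^ N * g t‖ ≤ C) {t : ℂ} (ht : t ∈ verticalClosedStrip (-h) h) :
    ‖t ^ N * g t‖ ≤ C * ‖Complex.tan ((π / (4 * h) : ℝ) * t)‖ ^ N := by
  set p : ℝ := π / (4 * h) with hp
  have hp0 : 0 < p := by positivity
  have hph : |p| * h = π / 4 := by rw [abs_of_pos hp0, hp]; field_simp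
  obtain ⟨G, hGd, hG⟩ := exists_pow_mul_eq_mul_tan_pow hp0.ne' hph.le hg N
  have hedge : ∀ t : ℂ, |t.re| = h → ‖G t‖ ≤ C := fun t hth => by
    have hre : |(p * t : ℂ).re| = π / 4 := by simp [abs_mul, hth, hph]
    have htan : ‖Complex.tan (p * t)‖ = 1 := by
      rw [Complex.tan_eq_sin_div_cos, norm_div, norm_sin_eq_norm_cos hre,
        div_self (norm_ne_zero_iff.2 (cos_ne_zero_of_abs_re_le hre.le))]
    simpa [hG t (abs_le.1 hth.le), htan] using hC t hth
  have hfar : ∀ t ∈ verticalClosedStrip (-h) h, 1 ≤ |t.im| →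
      ‖G t‖ ≤ (1 + 1 / Real.sinh p) ^ N * D := fun t ht him => by
    have hre : |(p * t : ℂ).re| ≤ π / 4 := by
      rw [Complex.re_ofReal_mul, abs_mul, ← hph]
      exact mul_le_mul_of_nonneg_left (abs_le.2 ht) (abs_nonneg p)
    have hcos := norm_pos_iff.2 (cos_ne_zero_of_abs_re_le hre)
    have htan : 1 ≤ (1 + 1 / Real.sinh p) * ‖Complex.tan (p * t)‖ := by
      rw [Complex.tan_eq_sin_div_cos, norm_div, mul_div_assoc', one_le_div hcos]
      refine norm_cos_le_mul_norm_sin hp0 ?_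
      rw [Complex.im_ofReal_mul, abs_mul, abs_of_pos hp0]
      exact le_mul_of_one_le_right hp0.le him
    calc ‖G t‖ ≤ ‖G t‖ * ((1 + 1 / Real.sinh p) * ‖Complex.tan (p * t)‖) ^ N :=
          le_mul_of_one_le_right (norm_nonneg _) (one_le_pow₀ htan)
      _ = (1 + 1 / Real.sinh p) ^ N * ‖t ^ N * g t‖ := by
          rw [hG t ht, norm_mul, norm_pow, mul_pow]; ring
      _ ≤ (1 + 1 / Real.sinh p) ^ N * D := by
          have := Real.sinh_pos_iff.2 hp0
          gcongr
          exact hD t ht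
  rw [hG t ht, norm_mul, norm_pow]
  gcongr
  refine norm_le_of_norm_le_on_edges (neg_lt_self hh) hGd hfar ?_ ?_ ht <;> intro z hz <;>
    exact hedge z (by simp [hz, abs_of_pos hh])

end SchwarzLemma

section BulkFreeEnergy

/-- The `n`-th coefficient (counted from `0`) of the cosine series of `bulkFreeEnergy`. -/
def bulkCoeff (ζ : ℝ) (n : ℕ) : ℝ :=
  Real.exp (-2 * (n + 1) * ζ) / ((n + 1) * Real.cosh ((n + 1) * ζ))

/-- The `n`-th term (counted from `0`) of the cosine series of `bulkFreeEnergy`. -/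
def bulkTerm (ζ : ℝ) (n : ℕ) (t : ℂ) : ℂ :=
  bulkCoeff ζ n * cosh ((n + 1 : ℝ) * (ζ - 2 * t))

/-- The function `F` on the strip `0 ≤ re t ≤ ζ` such that the leading eigenvalue of
`hyperbolicTransfer N ζ t` is of order `exp (N * F t)`. It is determined by its symmetry under
`t ↦ ζ - conj t` and by `exp (re (F t)) = ‖sinh (ζ - t)‖` for `re t = 0`. -/
def bulkFreeEnergy (ζ : ℝ) (t : ℂ) : ℂ := (ζ - Real.log 2 : ℝ) - ∑' n, bulkTerm ζ n t

lemma norm_cosh_le (z : ℂ) : ‖cosh z‖ ≤ Real.cosh z.re := by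
  rw [cosh, Real.cosh_eq, norm_div, Complex.norm_ofNat]
  gcongr
  refine (norm_add_le _ _).trans_eq ?_
  rw [Complex.norm_exp, Complex.norm_exp, Complex.neg_re]

lemma norm_exp_neg_two_mul_lt_one {z : ℂ} (hz : 0 < z.re) : ‖Complex.exp (-2 * z)‖ < 1 := by
  rw [Complex.norm_exp]
  simpa using hz

lemma one_sub_exp_neg_two_mul_ne_zero {z : ℂ} (hz : 0 < z.re) :
    1 - Complex.exp (-2 * z) ≠ 0 := fun h => by
  rw [sub_eq_zero] at h
  simpa only [← h, norm_one, lt_self_iff_false] using norm_exp_neg_two_mul_lt_one hz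

lemma log_norm_sinh {z : ℂ} (hz : 0 < z.re) :
    Real.log ‖sinh z‖ = z.re - Real.log 2 + Real.log ‖1 - Complex.exp (-2 * z)‖ := by
  have hsinh : sinh z = Complex.exp z / 2 * (1 - Complex.exp (-2 * z)) := by
    rw [sinh, div_mul_eq_mul_div, mul_sub, mul_one, ← Complex.exp_add,
      show z + -2 * z = -z by ring]
  rw [hsinh, norm_mul, norm_div, Complex.norm_exp, Complex.norm_ofNat,
    Real.log_mul (by positivity) (norm_ne_zero_iff.2 (one_sub_exp_neg_two_mul_ne_zero hz)),
    Real.log_div (by positivity) two_ne_zero, Real.log_exp]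

lemma hasSum_re_log_norm_one_sub_exp {z : ℂ} (hz : 0 < z.re) :
    HasSum (fun n : ℕ => (Complex.exp (-2 * z) ^ (n + 1) / (n + 1)).re)
      (-Real.log ‖1 - Complex.exp (-2 * z)‖) := by
  have hlog := Complex.hasSum_taylorSeries_neg_log (norm_exp_neg_two_mul_lt_one hz)
  rw [← hasSum_nat_add_iff' 1] at hlog
  simpa [Complex.log_re] using Complex.hasSum_re hlog

variable {ζ : ℝ} {n : ℕ} {t : ℂ}

lemma bulkCoeff_nonneg (ζ : ℝ) (n : ℕ) : 0 ≤ bulkCoeff ζ n := by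
  have := Real.cosh_pos ((n + 1) * ζ)
  unfold bulkCoeff
  positivity

lemma norm_bulkTerm_le {y : ℝ} (h : |ζ - 2 * t.re| ≤ y) :
    ‖bulkTerm ζ n t‖ ≤ bulkCoeff ζ n * Real.cosh ((n + 1) * y) := by
  have hn : (0 : ℝ) < n + 1 := by positivity
  rw [bulkTerm, norm_mul, Complex.norm_real, Real.norm_of_nonneg (bulkCoeff_nonneg ζ n)]
  refine mul_le_mul_of_nonneg_left ((norm_cosh_le _).trans ?_) (bulkCoeff_nonneg ζ n)
  have hre : (((n + 1 : ℝ) : ℂ) * (ζ - 2 * t)).re = (n + 1) * (ζ - 2 * t.re) := by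
    rw [Complex.re_ofReal_mul]
    simp
  rw [hre, Real.cosh_le_cosh, abs_mul, abs_mul, abs_of_pos hn]
  exact mul_le_mul_of_nonneg_left (h.trans (le_abs_self y)) hn.le

lemma norm_bulkTerm_le_exp_pow (ht : t ∈ verticalClosedStrip 0 ζ) :
    ‖bulkTerm ζ n t‖ ≤ Real.exp (-2 * ζ) ^ (n + 1) / (n + 1) := by
  have hcosh := (Real.cosh_pos ((n + 1) * ζ)).ne'
  refine (norm_bulkTerm_le (y := ζ) (abs_le.2 ⟨by linarith [ht.2], by linarith [ht.1]⟩)).trans_eq ?_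
  rw [bulkCoeff, ← Real.exp_nat_mul, ← div_div, div_mul_cancel₀ _ hcosh]
  push_cast
  ring_nf

lemma norm_bulkTerm_le_geometric (ht : |ζ - 2 * t.re| < 2 * ζ) :
    ‖bulkTerm ζ n t‖ ≤ 2 * Real.exp (-ζ) ^ (n + 1) := by
  have hζ : 0 < ζ := by linarith [abs_nonneg (ζ - 2 * t.re)]
  have hy : (0 : ℝ) < (n + 1) * ζ := by positivity
  have hcosh_le : Real.cosh ((n + 1) * (2 * ζ)) ≤ Real.exp (2 * ((n + 1) * ζ)) := by
    rw [Real.cosh_eq, show (n + 1 : ℝ) * (2 * ζ) = 2 * ((n + 1) * ζ) by ring]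
    have : Real.exp (-(2 * ((n + 1) * ζ))) ≤ Real.exp (2 * ((n + 1) * ζ)) :=
      Real.exp_le_exp.2 (by linarith)
    linarith
  have hle_cosh : Real.exp ((n + 1) * ζ) / 2 ≤ (n + 1) * Real.cosh ((n + 1) * ζ) := by
    refine le_trans ?_ (le_mul_of_one_le_left (Real.cosh_pos _).le (by simp))
    rw [Real.cosh_eq]
    gcongr
    exact le_add_of_nonneg_right (Real.exp_pos _).le
  calc ‖bulkTerm ζ n t‖ ≤ bulkCoeff ζ n * Real.cosh ((n + 1) * (2 * ζ)) := norm_bulkTerm_le ht.le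
    _ ≤ bulkCoeff ζ n * Real.exp (2 * ((n + 1) * ζ)) := by
        gcongr
        exact bulkCoeff_nonneg ζ n
    _ = 1 / ((n + 1) * Real.cosh ((n + 1) * ζ)) := by
        rw [bulkCoeff, div_mul_eq_mul_div, ← Real.exp_add]
        ring_nf
        simp
    _ ≤ 1 / (Real.exp ((n + 1) * ζ) / 2) := one_div_le_one_div_of_le (by positivity) hle_cosh
    _ = 2 * Real.exp (-ζ) ^ (n + 1) := by
        rw [← Real.exp_nat_mul, mul_neg, Real.exp_neg, one_div_div, div_eq_mul_inv]
        push_cast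
        ring

lemma summable_geometric_exp_neg (hζ : 0 < ζ) :
    Summable fun n : ℕ => 2 * Real.exp (-ζ) ^ (n + 1) :=
  ((summable_nat_add_iff 1).2 (summable_geometric_of_lt_one (Real.exp_pos _).le
    (Real.exp_lt_one_iff.2 (neg_neg_of_pos hζ)))).mul_left 2

lemma abs_sub_two_mul_re_lt (hζ : 0 < ζ) (ht : t ∈ verticalClosedStrip 0 ζ) :
    |ζ - 2 * t.re| < 2 * ζ :=
  abs_lt.2 ⟨by linarith [ht.2], by linarith [ht.1]⟩

lemma summable_bulkTerm (hζ : 0 < ζ) (ht : t ∈ verticalClosedStrip 0 ζ) :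
    Summable fun n => bulkTerm ζ n t :=
  .of_norm_bounded (summable_geometric_exp_neg hζ) fun _ =>
    norm_bulkTerm_le_geometric (abs_sub_two_mul_re_lt hζ ht)

lemma differentiableOn_bulkFreeEnergy (hζ : 0 < ζ) :
    DifferentiableOn ℂ (bulkFreeEnergy ζ) (verticalClosedStrip 0 ζ) := by
  have hopen : IsOpen {t : ℂ | |ζ - 2 * t.re| < 2 * ζ} :=
    isOpen_lt (by fun_prop) continuous_const
  refine DifferentiableOn.const_sub (DifferentiableOn.mono ?_ fun t => abs_sub_two_mul_re_lt hζ) _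
  refine Complex.differentiableOn_tsum_of_summable_norm (summable_geometric_exp_neg hζ)
    (fun n => ?_) hopen fun n t ht => norm_bulkTerm_le_geometric ht
  unfold bulkTerm
  fun_prop

lemma bulkFreeEnergy_reflect (ζ : ℝ) (t : ℂ) :
    bulkFreeEnergy ζ (ζ - conj t) = conj (bulkFreeEnergy ζ t) := by
  rw [bulkFreeEnergy, bulkFreeEnergy, map_sub, Complex.conj_ofReal, Complex.conj_tsum]
  congr! 3 with n
  rw [bulkTerm, bulkTerm, map_mul, Complex.conj_ofReal, ← Complex.cosh_conj, map_mul, map_sub,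
    map_mul, Complex.conj_ofReal, Complex.conj_ofReal, Complex.conj_ofNat, ← Complex.cosh_neg]
  ring_nf

lemma abs_re_tsum_bulkTerm_le (hζ : 0 < ζ) (ht : t ∈ verticalClosedStrip 0 ζ) :
    |(∑' n, bulkTerm ζ n t).re| ≤ -Real.log (1 - Real.exp (-2 * ζ)) := by
  have hexp : Real.exp (-2 * ζ) < 1 := Real.exp_lt_one_iff.2 (by linarith)
  have hlog := Real.hasSum_pow_div_log_of_abs_lt_one (x := Real.exp (-2 * ζ))
    (by rwa [abs_of_pos (Real.exp_pos _)])
  exact (Complex.abs_re_le_norm _).trans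
    (tsum_of_norm_bounded hlog fun n => norm_bulkTerm_le_exp_pow ht)

lemma sinh_le_exp_re_bulkFreeEnergy (hζ : 0 < ζ) (ht : t ∈ verticalClosedStrip 0 ζ) :
    Real.sinh ζ ≤ Real.exp (bulkFreeEnergy ζ t).re := by
  have hsinh := log_norm_sinh (z := ζ) (by simpa using hζ)
  have hexp : Real.exp (-2 * ζ) < 1 := Real.exp_lt_one_iff.2 (by linarith)
  have hcast : 1 - Complex.exp (-2 * ζ) = (1 - Real.exp (-2 * ζ) : ℝ) := by push_cast; rfl
  rw [hcast, ← Complex.ofReal_sinh, Complex.norm_real, Complex.norm_real,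
    Real.norm_of_nonneg (Real.sinh_nonneg_iff.2 hζ.le), Complex.ofReal_re,
    Real.norm_of_nonneg (by linarith)] at hsinh
  rw [← Real.log_le_iff_le_exp (Real.sinh_pos_iff.2 hζ), hsinh, bulkFreeEnergy, Complex.sub_re,
    Complex.ofReal_re]
  linarith [(abs_le.1 (abs_re_tsum_bulkTerm_le hζ ht)).2]

lemma exists_abs_re_bulkFreeEnergy_le (hζ : 0 < ζ) :
    ∃ B : ℝ, ∀ t ∈ verticalClosedStrip 0 ζ, |(bulkFreeEnergy ζ t).re| ≤ B :=
  ⟨_, fun t ht => by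
    rw [bulkFreeEnergy, Complex.sub_re, Complex.ofReal_re]
    exact (abs_sub _ _).trans (add_le_add_right (abs_re_tsum_bulkTerm_le hζ ht) _)⟩

lemma exp_pow_div_sub_bulkTerm (ζ : ℝ) (n : ℕ) (t : ℂ) :
    Complex.exp (-2 * (ζ - t)) ^ (n + 1) / (n + 1) - bulkTerm ζ n t =
      (Real.exp (-(n + 1) * ζ) / (n + 1) / Real.cosh ((n + 1) * ζ) : ℝ) *
        sinh (2 * (n + 1 : ℝ) * t) := by
  have hcosh : cosh ((n + 1) * ζ) ≠ 0 := by
    exact_mod_cast (Real.cosh_pos ((n + 1) * ζ)).ne'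
  have hn : (n + 1 : ℂ) ≠ 0 := n.cast_add_one_ne_zero
  rw [bulkTerm, bulkCoeff, ← Complex.exp_nat_mul]
  push_cast
  field_simp
  rw [cosh, cosh, sinh]
  simp only [mul_sub, mul_add, ← mul_div_assoc, add_mul, ← Complex.exp_add]
  ring_nf

lemma re_bulkFreeEnergy_eq (h0 : 0 ≤ t.re) (hζ : t.re < ζ) :
    (bulkFreeEnergy ζ t).re = Real.log ‖sinh (ζ - t)‖ + t.re +
      ∑' n : ℕ, Real.exp (-(n + 1) * ζ) / (n + 1) / Real.cosh ((n + 1) * ζ) *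
        (sinh (2 * (n + 1 : ℝ) * t)).re := by
  have hpos : 0 < (ζ - t : ℂ).re := by simpa using hζ
  have hsum := (hasSum_re_log_norm_one_sub_exp hpos).sub
    (Complex.hasSum_re (summable_bulkTerm (h0.trans_lt hζ) ⟨h0, hζ.le⟩).hasSum)
  simp only [← Complex.sub_re, exp_pow_div_sub_bulkTerm, Complex.re_ofReal_mul] at hsum
  rw [hsum.tsum_eq, log_norm_sinh hpos, bulkFreeEnergy]
  simp only [Complex.sub_re, Complex.ofReal_re]
  ring

lemma exp_re_bulkFreeEnergy_of_re_eq_zero (hζ : 0 < ζ) (ht : t.re = 0) :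
    Real.exp (bulkFreeEnergy ζ t).re = ‖sinh (ζ - t)‖ := by
  have hsinh : ∀ x : ℝ, (sinh (2 * x * t)).re = 0 := fun x => by
    rw [show 2 * x * t = (2 * x * t.im : ℝ) * I by apply Complex.ext <;> simp [ht],
      Complex.sinh_mul_I, ← Complex.ofReal_sin, Complex.re_ofReal_mul, Complex.I_re, mul_zero]
  have hne : sinh (ζ - t) ≠ 0 := sinh_ne_zero_of_re_ne_zero (by simpa [ht] using hζ.ne')
  rw [re_bulkFreeEnergy_eq ht.ge (ht.trans_lt hζ)]
  simp only [hsinh, mul_zero, tsum_zero, ht, add_zero, Real.exp_log (norm_pos_iff.2 hne)]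

lemma re_bulkFreeEnergy_ofReal {t : ℝ} (h0 : 0 ≤ t) (hζ : t < ζ) :
    (bulkFreeEnergy ζ t).re = Real.log (Real.sinh (ζ - t)) + t +
      ∑' n : ℕ, (Real.exp (-((n : ℝ) + 1) * ζ) / ((n : ℝ) + 1)) *
        (Real.sinh (2 * ((n : ℝ) + 1) * t) / Real.cosh (((n : ℝ) + 1) * ζ)) := by
  have hsinh : ∀ x : ℝ, (sinh (2 * x * t)).re = Real.sinh (2 * x * t) := fun x => by
    rw [← Complex.sinh_ofReal_re]
    push_cast
    rfl
  rw [re_bulkFreeEnergy_eq (by simpa using h0) (by simpa using hζ), Complex.ofReal_re]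
  rw [← Complex.ofReal_sub, ← Complex.ofReal_sinh, Complex.norm_real,
    Real.norm_of_nonneg (Real.sinh_nonneg_iff.2 (by linarith))]
  simp only [hsinh, div_mul_eq_mul_div, mul_div_assoc']

-- Phragmén–Lindelöf for `f * exp (k * F)`, whose boundary values on the line `re t = ζ` are
-- conjugate to those on the line `re t = 0`.
lemma norm_mul_exp_re_bulkFreeEnergy_zpow_le {f : ℂ → ℂ} {k : ℤ} {C : ℝ} (hζ : 0 < ζ)
    (hf : DifferentiableOn ℂ f (verticalClosedStrip 0 ζ)) (hper : Function.Periodic f (π * I))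
    (hrefl : ∀ t, f (ζ - conj t) = conj (f t))
    (haxis : ∀ t : ℂ, t.re = 0 → ‖f t‖ * ‖sinh (ζ - t)‖ ^ k ≤ C)
    (ht : t ∈ verticalClosedStrip 0 ζ) :
    ‖f t‖ * Real.exp (bulkFreeEnergy ζ t).re ^ k ≤ C := by
  have hnorm : ∀ t, ‖f t * Complex.exp (k * bulkFreeEnergy ζ t)‖ =
      ‖f t‖ * Real.exp (bulkFreeEnergy ζ t).re ^ k := fun t => by
    rw [norm_mul, Complex.exp_int_mul, norm_zpow, Complex.norm_exp]
  have hleft : ∀ t : ℂ, t.re = 0 → ‖f t‖ * Real.exp (bulkFreeEnergy ζ t).re ^ k ≤ C :=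
    fun t ht => (exp_re_bulkFreeEnergy_of_re_eq_zero hζ ht).symm ▸ haxis t ht
  obtain ⟨D, hD⟩ := periodic_exists_norm_le hper hf.continuousOn
  obtain ⟨B, hB⟩ := exists_abs_re_bulkFreeEnergy_le hζ
  rw [← hnorm]
  refine norm_le_of_norm_le_on_edges (f := fun t => f t * Complex.exp (k * bulkFreeEnergy ζ t))
    (D := D * Real.exp (|(k : ℝ)| * B)) hζ
    (hf.mul ((differentiableOn_bulkFreeEnergy hζ).const_mul _).cexp) (fun z hz _ => ?_)
    (fun z hz => (hnorm z).trans_le (hleft z hz)) (fun z hz => ?_) ht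
  · rw [hnorm, ← Real.rpow_intCast, ← Real.exp_mul, mul_comm _ (k : ℝ)]
    refine mul_le_mul (hD z hz) (Real.exp_le_exp.2 ((le_abs_self _).trans ?_)) (Real.exp_pos _).le
      ((norm_nonneg _).trans (hD z hz))
    rw [abs_mul]
    exact mul_le_mul_of_nonneg_left (hB z hz) (abs_nonneg _)
  · have h := hleft (ζ - conj z) (by simp [hz])
    rwa [bulkFreeEnergy_reflect, hrefl, Complex.conj_re, Complex.norm_conj, ← hnorm] at h

end BulkFreeEnergy

/-- `ψ` is a common unit eigenvector of the family `T`, with eigenvalue `Λ t` for `T t`. -/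
structure IsJointEigenpair {ι n : Type*} [Fintype n] (T : ι → Matrix n n ℂ) (ψ : n → ℂ)
    (Λ : ι → ℂ) : Prop where
  unit : star ψ ⬝ᵥ ψ = 1
  eig : ∀ t, T t *ᵥ ψ = Λ t • ψ

namespace IsJointEigenpair

section General

variable {ι n : Type*} [Fintype n] {T : ι → Matrix n n ℂ} {ψ : n → ℂ} {Λ : ι → ℂ}

lemma of_mul_eq_mul_diagonal [DecidableEq n] {U : Matrix n n ℂ} (hU : U ∈ unitaryGroup n ℂ)
    {d : n → ι → ℂ} (h : ∀ t, T t * U = U * diagonal fun j => d j t) (j : n) :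
    IsJointEigenpair T (U.col j) (d j) where
  unit := by simpa [Matrix.mul_apply, dotProduct] using congr_fun₂ (mem_unitaryGroup_iff'.1 hU) j j
  eig t := by
    ext i
    have hij := congr_fun₂ (h t) i j
    rw [Matrix.mul_diagonal] at hij
    simpa [Matrix.mul_apply, Matrix.mulVec, dotProduct, mul_comm] using hij

lemma eigenvalue_eq (h : IsJointEigenpair T ψ Λ) (t : ι) : Λ t = star ψ ⬝ᵥ (T t *ᵥ ψ) := by
  rw [h.eig, dotProduct_smul, h.unit, smul_eq_mul, mul_one]

lemma differentiable {T : ℂ → Matrix n n ℂ} {Λ : ℂ → ℂ} (h : IsJointEigenpair T ψ Λ)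
    (hT : ∀ i j, Differentiable ℂ fun t => T t i j) : Differentiable ℂ Λ := by
  rw [funext h.eigenvalue_eq]
  simp only [dotProduct, Matrix.mulVec]
  fun_prop

end General

variable {N : ℕ} {ζ : ℝ} {ψ : (Fin N → Bool) → ℂ} {Λ : ℂ → ℂ}
  (h : IsJointEigenpair (hyperbolicTransfer N ζ) ψ Λ)
include h

lemma eigenvalue_reflect (t : ℂ) : Λ (ζ - conj t) = conj (Λ t) := by
  rw [h.eigenvalue_eq, ← hyperbolicTransfer_conjTranspose, h.eigenvalue_eq t,
    ← Complex.star_def, ← Matrix.star_dotProduct, Matrix.star_mulVec, ← Matrix.dotProduct_mulVec]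

lemma eigenvalue_periodic (hN : Even N) : Function.Periodic Λ (π * I) := fun t => by
  rw [h.eigenvalue_eq, h.eigenvalue_eq, hyperbolicTransfer_periodic hN ζ]

lemma differentiable_eigenvalue : Differentiable ℂ Λ :=
  h.differentiable (differentiable_hyperbolicTransfer ζ)

lemma norm_eigenvalue_le_of_re_eq_zero {t : ℂ} (ht : t.re = 0) :
    ‖Λ t‖ ≤ 2 * ‖sinh (ζ - t)‖ ^ N := by
  rw [h.eigenvalue_eq]
  exact norm_star_dotProduct_transferMatrix_mulVec_le (norm_nonneg _)
    (isScaledUnitary_hyperbolicLax ζ ht) h.unit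

lemma norm_eigenvalue_le (hζ : 0 < ζ) (hN : Even N) {t : ℂ} (ht : t ∈ verticalClosedStrip 0 ζ) :
    ‖Λ t‖ ≤ 2 * Real.exp (bulkFreeEnergy ζ t).re ^ N := by
  have hbound := norm_mul_exp_re_bulkFreeEnergy_zpow_le (k := -N) (C := 2) hζ
    h.differentiable_eigenvalue.differentiableOn (h.eigenvalue_periodic hN) h.eigenvalue_reflect
    (fun u hu => ?_) ht
  · rwa [_root_.zpow_neg, zpow_natCast, mul_inv_le_iff₀ (by positivity)] at hbound
  · have hne : sinh (ζ - u) ≠ 0 := sinh_ne_zero_of_re_ne_zero (by simpa [hu] using hζ.ne')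
    rw [_root_.zpow_neg, zpow_natCast, mul_inv_le_iff₀ (pow_pos (norm_pos_iff.2 hne) N)]
    exact h.norm_eigenvalue_le_of_re_eq_zero hu

lemma le_norm_eigenvalue (hζ : 0 < ζ) (hN : Even N) (hne : ∀ t ∈ verticalClosedStrip 0 ζ, Λ t ≠ 0)
    {C : ℝ} (hC : 0 < C) (haxis : ∀ t : ℂ, t.re = 0 → C * ‖sinh (ζ - t)‖ ^ N ≤ ‖Λ t‖) {t : ℂ}
    (ht : t ∈ verticalClosedStrip 0 ζ) :
    C * Real.exp (bulkFreeEnergy ζ t).re ^ N ≤ ‖Λ t‖ := by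
  have hbound := norm_mul_exp_re_bulkFreeEnergy_zpow_le (f := fun t => (Λ t)⁻¹) (k := N)
    (C := C⁻¹) hζ (h.differentiable_eigenvalue.differentiableOn.fun_inv hne)
    (fun t => congrArg _ (h.eigenvalue_periodic hN t))
    (fun t => by rw [h.eigenvalue_reflect, map_inv₀]) (fun u hu => ?_) ht
  · rwa [zpow_natCast, norm_inv, inv_mul_le_iff₀ (norm_pos_iff.2 (hne t ht)), ← div_eq_mul_inv,
      le_div_iff₀ hC, mul_comm] at hbound
  · have hu' : u ∈ verticalClosedStrip 0 ζ := ⟨hu.ge, hu.trans_le hζ.le⟩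
    rw [zpow_natCast, norm_inv, inv_mul_le_iff₀ (norm_pos_iff.2 (hne u hu')), ← div_eq_mul_inv,
      le_div_iff₀ hC, mul_comm]
    exact haxis u hu

end IsJointEigenpair

section Fusion

variable {N : ℕ} {ζ : ℝ} {ψ : (Fin N → Bool) → ℂ} {Λ : ℂ → ℂ} {t : ℂ}

/-- The expectation in the state `ψ` of the transfer matrix of the fused (three-dimensional)
Lax operator. -/
def fusedExpectation (ζ : ℝ) (ψ : (Fin N → Bool) → ℂ) (t : ℂ) : ℂ :=
  star ψ ⬝ᵥ (transferMatrix (hyperbolicFusedLax ζ t) N *ᵥ ψ)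

lemma differentiable_hyperbolicFusedLax (ζ : ℝ) (s s' : Bool) (i j : Fin 3) :
    Differentiable ℂ fun t => hyperbolicFusedLax ζ t s s' i j := by
  unfold hyperbolicFusedLax
  cases s <;> cases s' <;> fin_cases i <;> fin_cases j <;>
    simp only [fusedLax, of_apply, cons_val, Fin.zero_eta, Fin.mk_one, Fin.reduceFinMk] <;>
    fun_prop

lemma differentiable_fusedExpectation (ζ : ℝ) (ψ : (Fin N → Bool) → ℂ) :
    Differentiable ℂ (fusedExpectation ζ ψ) := by
  have := differentiable_transferMatrix (differentiable_hyperbolicFusedLax ζ) (N := N)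
  unfold fusedExpectation
  simp only [dotProduct, Matrix.mulVec]
  fun_prop

lemma norm_fusedExpectation_le (hψ : star ψ ⬝ᵥ ψ = 1) (ht : t.re = -ζ / 2) :
    ‖fusedExpectation ζ ψ t‖ ≤ 3 * ‖sinh (ζ - t)‖ ^ N := by
  simpa [fusedExpectation] using norm_star_dotProduct_transferMatrix_mulVec_le (norm_nonneg _)
    (isScaledUnitary_hyperbolicFusedLax ζ ht) hψ

lemma IsJointEigenpair.eigenvalue_mul_eigenvalue
    (h : IsJointEigenpair (hyperbolicTransfer N ζ) ψ Λ) (t : ℂ) :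
    Λ t * Λ (ζ + t) =
      (sinh (ζ - t) * sinh (ζ + t)) ^ N + sinh t ^ N * fusedExpectation ζ ψ t := by
  have hfusion := congrArg (fun A => star ψ ⬝ᵥ (A *ᵥ ψ)) (hyperbolicTransfer_fusion N ζ t)
  simpa only [fusedExpectation, ← Matrix.mulVec_mulVec, h.eig, Matrix.mulVec_smul,
    dotProduct_smul, h.unit, Matrix.add_mulVec, Matrix.smul_mulVec, Matrix.one_mulVec,
    dotProduct_add, smul_eq_mul, mul_one, mul_comm (Λ (ζ + t))] using hfusion

end Fusion

section FusionDefect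

/-- The relative error in the approximate inversion relation
`Λ t * Λ (ζ + t) ≈ (sinh (ζ - t) * sinh (ζ + t)) ^ N`. -/
def fusionDefect (N : ℕ) (ζ : ℝ) (Λ : ℂ → ℂ) (t : ℂ) : ℂ :=
  Λ t * Λ (ζ + t) / (sinh (ζ - t) * sinh (ζ + t)) ^ N - 1

lemma sinh_sub_mul_sinh_add_ne_zero {ζ : ℝ} {t : ℂ} (ht : |t.re| < ζ) :
    sinh (ζ - t) * sinh (ζ + t) ≠ 0 := by
  rw [abs_lt] at ht
  refine mul_ne_zero (sinh_ne_zero_of_re_ne_zero ?_) (sinh_ne_zero_of_re_ne_zero ?_) <;>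
    simp only [Complex.add_re, Complex.sub_re, Complex.ofReal_re] <;> linarith

lemma tanh_monotone : Monotone Real.tanh := fun x y hxy => by
  refine (Real.strictMonoOn_artanh.le_iff_le ⟨Real.neg_one_lt_tanh x, Real.tanh_lt_one x⟩
    ⟨Real.neg_one_lt_tanh y, Real.tanh_lt_one y⟩).1 ?_
  rwa [Real.artanh_tanh, Real.artanh_tanh]

lemma norm_tan_of_re_eq_zero {w : ℂ} (hw : w.re = 0) :
    ‖Complex.tan w‖ = Real.tanh |w.im| := by
  have hw' : w = (w.im : ℂ) * I := by apply Complex.ext <;> simp [hw]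
  rw [hw', Complex.tan_mul_I, norm_mul, Complex.norm_I, mul_one, ← Complex.ofReal_tanh,
    Complex.norm_real, Real.norm_eq_abs, Real.tanh_eq_sinh_div_cosh, abs_div, Real.abs_sinh,
    abs_of_pos (Real.cosh_pos _), Real.tanh_eq_sinh_div_cosh, Real.cosh_abs]
  simp

variable {N : ℕ} {ζ : ℝ} {ψ : (Fin N → Bool) → ℂ} {Λ : ℂ → ℂ} {t : ℂ}
  (h : IsJointEigenpair (hyperbolicTransfer N ζ) ψ Λ)

namespace IsJointEigenpair

include h

lemma eigenvalue_neg_conj (t : ℂ) : Λ (-conj t) = conj (Λ (ζ + t)) := by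
  rw [← h.eigenvalue_reflect, map_add, Complex.conj_ofReal, sub_add_cancel_left]

lemma fusionDefect_neg_conj (t : ℂ) :
    fusionDefect N ζ Λ (-conj t) = conj (fusionDefect N ζ Λ t) := by
  have hsub : (ζ : ℂ) - -conj t = conj (ζ + t) := by simp
  have hadd : (ζ : ℂ) + -conj t = conj (ζ - t) := by simp [sub_eq_add_neg]
  rw [fusionDefect, fusionDefect, h.eigenvalue_neg_conj, ← sub_eq_add_neg (ζ : ℂ),
    h.eigenvalue_reflect, sub_eq_add_neg (ζ : ℂ) (conj t), hsub, hadd, Complex.sinh_conj,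
    Complex.sinh_conj]
  simp only [map_sub, map_div₀, map_mul, map_pow, map_one, mul_comm]

lemma fusionDefect_periodic (hN : Even N) : Function.Periodic (fusionDefect N ζ Λ) (π * I) := by
  intro t
  have hsub : sinh (ζ - (t + π * I)) = -sinh (ζ - t) := by
    rw [← neg_eq_iff_eq_neg, ← sinh_add_pi_mul_I]
    ring_nf
  rw [fusionDefect, fusionDefect, hsub, ← add_assoc, sinh_add_pi_mul_I, neg_mul_neg,
    h.eigenvalue_periodic hN, h.eigenvalue_periodic hN]

lemma fusionDefect_eq (ht : |t.re| < ζ) :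
    fusionDefect N ζ Λ t =
      sinh t ^ N * fusedExpectation ζ ψ t / (sinh (ζ - t) * sinh (ζ + t)) ^ N := by
  have hne := pow_ne_zero N (sinh_sub_mul_sinh_add_ne_zero ht)
  rw [fusionDefect, h.eigenvalue_mul_eigenvalue, add_div, div_self hne, add_sub_cancel_left]

lemma norm_fusionDefect_le_of_re_eq (hζ : 0 < ζ) (ht : t.re = -ζ / 2) :
    ‖fusionDefect N ζ Λ t‖ ≤ 3 := by
  have habs : |t.re| < ζ := by rw [ht, abs_lt]; constructor <;> linarith
  have hne := mul_ne_zero_iff.1 (sinh_sub_mul_sinh_add_ne_zero habs)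
  have hsinh : ‖sinh (ζ + t)‖ = ‖sinh t‖ := by
    rw [← pow_left_inj₀ (norm_nonneg _) (norm_nonneg _) two_ne_zero, norm_sinh_sq, norm_sinh_sq,
      show (ζ + t : ℂ).re = -t.re by rw [Complex.add_re, Complex.ofReal_re]; linarith]
    simp
  rw [h.fusionDefect_eq habs, norm_div, norm_mul, norm_pow, norm_pow, norm_mul, mul_pow, ← hsinh,
    mul_comm, mul_div_mul_right _ _ (pow_ne_zero N (norm_ne_zero_iff.2 hne.2)),
    div_le_iff₀ (pow_pos (norm_pos_iff.2 hne.1) N)]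
  exact norm_fusedExpectation_le h.unit ht

lemma norm_fusionDefect_le_of_abs_re_eq (hζ : 0 < ζ) (ht : |t.re| = ζ / 2) :
    ‖fusionDefect N ζ Λ t‖ ≤ 3 := by
  rcases (abs_eq (by linarith)).1 ht with hre | hre
  · rw [← Complex.norm_conj, ← h.fusionDefect_neg_conj]
    exact h.norm_fusionDefect_le_of_re_eq hζ (by simp [hre, neg_div])
  · exact h.norm_fusionDefect_le_of_re_eq hζ (by rw [hre, neg_div])

lemma norm_fusionDefect_le_norm_tan_pow (hζ : 0 < ζ) (hN : Even N)
    (ht : t ∈ verticalClosedStrip (-(ζ / 2)) (ζ / 2)) :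
    ‖fusionDefect N ζ Λ t‖ ≤ 3 * ‖Complex.tan ((π / (4 * (ζ / 2)) : ℝ) * t)‖ ^ N := by
  have hre : ∀ t ∈ verticalClosedStrip (-(ζ / 2)) (ζ / 2), |t.re| < ζ := fun t ht =>
    abs_lt.2 ⟨by linarith [ht.1], by linarith [ht.2]⟩
  let g : ℂ → ℂ := fun t =>
    dslope sinh 0 t ^ N * fusedExpectation ζ ψ t / (sinh (ζ - t) * sinh (ζ + t)) ^ N
  have hdefect : ∀ t ∈ verticalClosedStrip (-(ζ / 2)) (ζ / 2),
      fusionDefect N ζ Λ t = t ^ N * g t := fun t ht => by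
    rw [h.fusionDefect_eq (hre t ht), ← mul_dslope_zero Complex.sinh_zero t]
    simp only [g]
    ring
  have hP : ∀ t ∈ verticalClosedStrip (-(ζ / 2)) (ζ / 2),
      (sinh (ζ - t) * sinh (ζ + t)) ^ N ≠ 0 := fun t ht =>
    pow_ne_zero N (sinh_sub_mul_sinh_add_ne_zero (hre t ht))
  have hg : DifferentiableOn ℂ g (verticalClosedStrip (-(ζ / 2)) (ζ / 2)) := by
    have hslope := differentiable_dslope Complex.differentiable_sinh 0
    have hX := differentiable_fusedExpectation ζ ψ
    exact DifferentiableOn.div (Differentiable.differentiableOn (by fun_prop))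
      (Differentiable.differentiableOn (by fun_prop)) hP
  have hcont : ContinuousOn (fusionDefect N ζ Λ) (verticalClosedStrip (-(ζ / 2)) (ζ / 2)) :=
    (ContinuousOn.mul (by fun_prop) hg.continuousOn).congr hdefect
  obtain ⟨D, hD⟩ := periodic_exists_norm_le (h.fusionDefect_periodic hN) hcont
  rw [hdefect t ht]
  refine norm_pow_mul_le_mul_norm_tan_pow (half_pos hζ) hg (fun u hu => hdefect u hu ▸ hD u hu)
    (fun u hu => ?_) ht
  rw [← hdefect u (abs_le.1 hu.le)]
  exact h.norm_fusionDefect_le_of_abs_re_eq hζ hu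

lemma norm_fusionDefect_le_tanh_pow (hζ : 0 < ζ) (hN : Even N) (ht : t.re = 0) :
    ‖fusionDefect N ζ Λ t‖ ≤ 3 * Real.tanh (π ^ 2 / (4 * ζ)) ^ N := by
  refine periodic_forall_mem_verticalClosedStrip (a := 0) (b := 0) (h.fusionDefect_periodic hN)
    (p := fun z => ‖z‖ ≤ 3 * Real.tanh (π ^ 2 / (4 * ζ)) ^ N) (fun u hu him => ?_) ⟨ht.ge, ht.le⟩
  have hu0 : u.re = 0 := le_antisymm hu.2 hu.1
  have hp : 0 < π / (4 * (ζ / 2)) := by positivity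
  refine (h.norm_fusionDefect_le_norm_tan_pow hζ hN ⟨by linarith, by linarith⟩).trans ?_
  gcongr
  rw [norm_tan_of_re_eq_zero (by rw [Complex.re_ofReal_mul, hu0, mul_zero])]
  refine tanh_monotone ?_
  rw [Complex.im_ofReal_mul, abs_mul, abs_of_pos hp]
  calc π / (4 * (ζ / 2)) * |u.im| ≤ π / (4 * (ζ / 2)) * (π / 2) := by gcongr
    _ = π ^ 2 / (4 * ζ) := by field_simp

lemma norm_eigenvalue_sq_of_re_eq_zero (hζ : 0 < ζ) (ht : t.re = 0) :
    ‖Λ t‖ ^ 2 = (‖sinh (ζ - t)‖ ^ N) ^ 2 * ‖1 + fusionDefect N ζ Λ t‖ := by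
  have hconj : -conj t = t := by apply Complex.ext <;> simp [ht]
  have hΛ : ‖Λ (ζ + t)‖ = ‖Λ t‖ := by
    rw [← Complex.norm_conj, ← h.eigenvalue_neg_conj, hconj]
  have hsinh : ‖sinh (ζ + t)‖ = ‖sinh (ζ - t)‖ := by
    rw [← Complex.norm_conj, ← Complex.sinh_conj, map_add, Complex.conj_ofReal,
      ← neg_neg (conj t), hconj, sub_eq_add_neg]
  have hne := pow_ne_zero N (sinh_sub_mul_sinh_add_ne_zero (t := t) (by rwa [ht, abs_zero]))
  have hprod : Λ t * Λ (ζ + t) =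
      (sinh (ζ - t) * sinh (ζ + t)) ^ N * (1 + fusionDefect N ζ Λ t) := by
    rw [fusionDefect, add_sub_cancel, mul_div_cancel₀ _ hne]
  have hnorm := congrArg norm hprod
  rwa [norm_mul, norm_mul, norm_pow, norm_mul, hΛ, hsinh, ← sq, ← sq, pow_right_comm] at hnorm

end IsJointEigenpair

lemma tanh_pi_sq_div_nonneg (hζ : 0 < ζ) : 0 ≤ Real.tanh (π ^ 2 / (4 * ζ)) := by
  simpa using tanh_monotone (show 0 ≤ π ^ 2 / (4 * ζ) by positivity)

/-- Every joint eigenvalue `Λ` of the width-`N` transfer matrices with parameter `ζ` satisfies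
`1/2 * |sinh (ζ - t)| ^ N ≤ |Λ t|` on the imaginary axis. -/
def HasAxisBound (N : ℕ) (ζ : ℝ) : Prop :=
  ∀ ψ Λ, IsJointEigenpair (hyperbolicTransfer N ζ) ψ Λ → ∀ t : ℂ, t.re = 0 →
    1 / 2 * ‖sinh (ζ - t)‖ ^ N ≤ ‖Λ t‖

lemma eventually_forall_hasAxisBound {ζ₁ : ℝ} (hζ₁ : 0 < ζ₁) :
    ∀ᶠ N : ℕ in atTop, Even N → ∀ ζ, ζ₁ ≤ ζ → HasAxisBound N ζ := by
  have hlim := tendsto_pow_atTop_nhds_zero_of_lt_one (tanh_pi_sq_div_nonneg hζ₁)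
    (Real.tanh_lt_one _)
  filter_upwards [hlim.eventually_le_const (show (0 : ℝ) < 1 / 4 by norm_num)]
    with N hsmall hN ζ hζ ψ Λ h t ht
  have hζ0 : 0 < ζ := hζ₁.trans_le hζ
  have hdefect : ‖fusionDefect N ζ Λ t‖ ≤ 3 / 4 := by
    have hmono : Real.tanh (π ^ 2 / (4 * ζ)) ^ N ≤ Real.tanh (π ^ 2 / (4 * ζ₁)) ^ N :=
      pow_le_pow_left₀ (tanh_pi_sq_div_nonneg hζ0) (tanh_monotone (by gcongr)) N
    linarith [h.norm_fusionDefect_le_tanh_pow hζ0 hN ht]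
  have hone : 1 / 4 ≤ ‖1 + fusionDefect N ζ Λ t‖ := by
    have htri := norm_sub_le (1 + fusionDefect N ζ Λ t) (fusionDefect N ζ Λ t)
    rw [add_sub_cancel_right, norm_one] at htri
    linarith
  refine le_of_sq_le_sq ?_ (norm_nonneg _)
  rw [h.norm_eigenvalue_sq_of_re_eq_zero hζ0 ht, mul_pow]
  nlinarith [sq_nonneg (‖sinh (ζ - t)‖ ^ N)]

end FusionDefect

section ApproximateEigenvectors

lemma eventually_forall_norm_sub_le {X Y m n : Type*} [TopologicalSpace X] [TopologicalSpace Y]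
    [Finite m] [Finite n] {f : X → Y → Matrix m n ℂ} (hf : Continuous (Function.uncurry f))
    {K : Set Y} (hK : IsCompact K) (x₀ : X) {ε : ℝ} (hε : 0 < ε) :
    ∀ᶠ x in 𝓝 x₀, ∀ y ∈ K, ∀ i j, ‖f x y i j - f x₀ y i j‖ ≤ ε := by
  refine hK.eventually_forall_of_forall_eventually
    (P := fun x y => ∀ i j, ‖f x y i j - f x₀ y i j‖ ≤ ε) fun y _ => ?_
  simp only [eventually_all]
  intro i j
  have hcont : Continuous fun p : X × Y => ‖f p.1 p.2 i j - f x₀ p.2 i j‖ :=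
    ((hf.matrix_elem i j).sub ((hf.matrix_elem i j).comp
      (continuous_const.prodMk continuous_snd))).norm
  exact (hcont.tendsto' (x₀, y) 0 (by simp)).eventually_le_const hε

variable {n : Type*} [Fintype n]

lemma norm_star_dotProduct_mulVec_le_card {u v : n → ℂ} (hu : star u ⬝ᵥ u = 1)
    (hv : star v ⬝ᵥ v = 1) {A : Matrix n n ℂ} {ε : ℝ} (hA : ∀ i j, ‖A i j‖ ≤ ε) :
    ‖star u ⬝ᵥ (A *ᵥ v)‖ ≤ (Fintype.card n : ℝ) ^ 2 * ε := by
  have hterm : ∀ i j, ‖star u i * (A i j * v j)‖ ≤ ε := fun i j => by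
    have hε : 0 ≤ ε := (norm_nonneg _).trans (hA i j)
    calc ‖star u i * (A i j * v j)‖ = ‖u i‖ * (‖A i j‖ * ‖v j‖) := by simp
      _ ≤ 1 * (ε * 1) := by
        gcongr
        exacts [norm_apply_le_one hu i, hA i j, norm_apply_le_one hv j]
      _ = ε := by ring
  calc ‖star u ⬝ᵥ (A *ᵥ v)‖ = ‖∑ i, ∑ j, star u i * (A i j * v j)‖ := by
        simp only [dotProduct, Matrix.mulVec, Finset.mul_sum]
    _ ≤ ∑ _i : n, ∑ _j : n, ε :=
        norm_sum_le_of_le _ fun i _ => norm_sum_le_of_le _ fun j _ => hterm i j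
    _ = (Fintype.card n : ℝ) ^ 2 * ε := by
        simp only [Finset.sum_const, Finset.card_univ, nsmul_eq_mul]
        ring

lemma norm_sub_le_of_inv_card_le_overlap {u v : n → ℂ} (hu : star u ⬝ᵥ u = 1)
    (hv : star v ⬝ᵥ v = 1) (huv : (Fintype.card n : ℝ)⁻¹ ≤ ‖star u ⬝ᵥ v‖ ^ 2)
    {A B : Matrix n n ℂ} {l μ : ℂ} (hA : star u ᵥ* A = l • star u) (hB : B *ᵥ v = μ • v)
    {ε : ℝ} (hAB : ∀ i j, ‖A i j - B i j‖ ≤ ε) :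
    ‖l - μ‖ ≤ (Fintype.card n : ℝ) ^ 3 * ε := by
  have hne : Nonempty n := by
    by_contra hempty
    rw [not_nonempty_iff] at hempty
    simp [dotProduct] at hu
  have hcard : (1 : ℝ) ≤ Fintype.card n := by exact_mod_cast Fintype.card_pos (α := n)
  have hoverlap : (Fintype.card n : ℝ)⁻¹ ≤ ‖star u ⬝ᵥ v‖ := by
    by_contra! hlt
    nlinarith [norm_nonneg (star u ⬝ᵥ v), inv_le_one_of_one_le₀ hcard]
  have hdiff : star u ⬝ᵥ ((A - B) *ᵥ v) = (l - μ) * (star u ⬝ᵥ v) := by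
    rw [Matrix.sub_mulVec, dotProduct_sub, hB, dotProduct_smul, Matrix.dotProduct_mulVec _ A, hA,
      smul_dotProduct, smul_eq_mul, smul_eq_mul, sub_mul]
  have hbound := norm_star_dotProduct_mulVec_le_card hu hv (A := A - B) hAB
  rw [hdiff, norm_mul] at hbound
  calc ‖l - μ‖ = Fintype.card n * (‖l - μ‖ * (Fintype.card n : ℝ)⁻¹) := by field_simp
    _ ≤ Fintype.card n * (‖l - μ‖ * ‖star u ⬝ᵥ v‖) := by gcongr
    _ ≤ Fintype.card n * ((Fintype.card n : ℝ) ^ 2 * ε) := by gcongr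
    _ = (Fintype.card n : ℝ) ^ 3 * ε := by ring

end ApproximateEigenvectors

section Continuation

variable {N : ℕ} {ζ : ℝ}

lemma exists_unitary_hyperbolicTransfer_mul_eq (N : ℕ) (hζ : ζ ≠ 0) :
    ∃ U ∈ unitaryGroup (Fin N → Bool) ℂ, ∃ Λ : (Fin N → Bool) → ℂ → ℂ,
      ∀ t, hyperbolicTransfer N ζ t * U = U * diagonal fun j => Λ j t := by
  refine exists_unitary_mul_eq_mul_diagonal_of_entire (x := ζ / 2)
    (differentiable_hyperbolicTransfer ζ) (fun t ht => ?_)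
    fun t u ht hu => hyperbolicTransfer_commute_of_re_eq N hζ (ht.trans hu.symm)
  rw [IsHermitian, hyperbolicTransfer_conjTranspose]
  congr 1
  apply Complex.ext <;> simp [ht, sub_half]

lemma exists_isJointEigenpair_overlap {n ι : Type*} [Fintype n] [DecidableEq n]
    {T : ι → Matrix n n ℂ} {U : Matrix n n ℂ} (hU : U ∈ unitaryGroup n ℂ) {d : n → ι → ℂ}
    (h : ∀ t, T t * U = U * diagonal fun j => d j t) {v : n → ℂ} (hv : star v ⬝ᵥ v = 1) :
    ∃ j, IsJointEigenpair T (U.col j) (d j) ∧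
      (Fintype.card n : ℝ)⁻¹ ≤ ‖star (U.col j) ⬝ᵥ v‖ ^ 2 := by
  obtain ⟨j, hj⟩ := exists_inv_card_le_norm_sq ((star_mulVec_dotProduct_mulVec hU v).trans hv)
  exact ⟨j, .of_mul_eq_mul_diagonal hU h j, hj⟩

lemma IsJointEigenpair.star_vecMul {ψ : (Fin N → Bool) → ℂ} {Λ : ℂ → ℂ}
    (h : IsJointEigenpair (hyperbolicTransfer N ζ) ψ Λ) (t : ℂ) :
    star ψ ᵥ* hyperbolicTransfer N ζ t = Λ t • star ψ := by
  rw [← conjTranspose_conjTranspose (hyperbolicTransfer N ζ t), hyperbolicTransfer_conjTranspose,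
    ← star_mulVec, h.eig, h.eigenvalue_reflect, star_smul, ← Complex.star_def, star_star]

/-- The width-`N` transfer matrices with parameter `ζ` have a joint eigenvalue without zeros in the
closed strip `0 ≤ re t ≤ ζ`. -/
def HasNonvanishingEigenvalue (N : ℕ) (ζ : ℝ) : Prop :=
  ∃ (ψ : (Fin N → Bool) → ℂ) (Λ : ℂ → ℂ), IsJointEigenpair (hyperbolicTransfer N ζ) ψ Λ ∧
    ∀ t ∈ verticalClosedStrip 0 ζ, Λ t ≠ 0

/-- The point of the strip `0 ≤ re t ≤ ζ` with coordinates `p`, the real part being measured in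
units of `ζ`. -/
def stripPoint (ζ : ℝ) (p : ℝ × ℝ) : ℂ := (ζ * p.1 : ℝ) + p.2 * I

lemma stripPoint_mem_verticalClosedStrip (hζ : 0 ≤ ζ) {p : ℝ × ℝ} (hp : p.1 ∈ Set.Icc 0 1) :
    stripPoint ζ p ∈ verticalClosedStrip 0 ζ := by
  have hre : (stripPoint ζ p).re = ζ * p.1 := by simp [stripPoint]
  rw [verticalClosedStrip, Set.mem_preimage, hre]
  exact ⟨mul_nonneg hζ hp.1, mul_le_of_le_one_right hζ hp.2⟩

lemma stripPoint_re_div_im (hζ : ζ ≠ 0) (t : ℂ) : stripPoint ζ (t.re / ζ, t.im) = t := by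
  rw [stripPoint, mul_div_cancel₀ _ hζ, Complex.re_add_im]

lemma HasNonvanishingEigenvalue.of_forall_norm_sub_le {ζ' ε : ℝ} (hN : Even N) (hζ : 0 < ζ)
    (hζ' : 0 < ζ') (haxis : HasAxisBound N ζ)
    (hclose : ∀ p ∈ Set.Icc (0 : ℝ) 1 ×ˢ Set.Icc (-(π / 2)) (π / 2), ∀ σ τ,
      ‖hyperbolicTransfer N ζ' (stripPoint ζ' p) σ τ
        - hyperbolicTransfer N ζ (stripPoint ζ p) σ τ‖ ≤ ε)
    (hε : (2 ^ N) ^ 3 * ε < 1 / 2 * Real.sinh ζ ^ N) (h : HasNonvanishingEigenvalue N ζ) :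
    HasNonvanishingEigenvalue N ζ' := by
  obtain ⟨v, Λ, hv, hne⟩ := h
  obtain ⟨U, hU, Λ', hdiag⟩ := exists_unitary_hyperbolicTransfer_mul_eq N hζ'.ne'
  obtain ⟨j, hj, hoverlap⟩ := exists_isJointEigenpair_overlap hU hdiag hv.unit
  refine ⟨_, _, hj, fun t ht => ?_⟩
  refine periodic_forall_mem_verticalClosedStrip (hj.eigenvalue_periodic hN)
    (p := fun z => z ≠ 0) (fun u hu him h0 => ?_) ht
  have hp : u.re / ζ' ∈ Set.Icc 0 1 := ⟨div_nonneg hu.1 hζ'.le, (div_le_one hζ').2 hu.2⟩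
  have hmem := stripPoint_mem_verticalClosedStrip hζ.le (p := (u.re / ζ', u.im)) hp
  have hlow := hv.le_norm_eigenvalue hζ hN hne one_half_pos (haxis v Λ hv) hmem
  have hsinh := pow_le_pow_left₀ (Real.sinh_pos_iff.2 hζ).le
    (sinh_le_exp_re_bulkFreeEnergy hζ hmem) N
  have hdist := norm_sub_le_of_inv_card_le_overlap hj.unit hv.unit hoverlap (hj.star_vecMul _)
    (hv.eig _) (hclose (u.re / ζ', u.im) ⟨hp, abs_le.1 him⟩)
  rw [stripPoint_re_div_im hζ'.ne', h0, zero_sub, norm_neg, Fintype.card_fun, Fintype.card_bool,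
    Fintype.card_fin, Nat.cast_pow, Nat.cast_ofNat] at hdist
  linarith

lemma HasNonvanishingEigenvalue.of_le {ζ' : ℝ} (hN : Even N) (hζ : 0 < ζ) (hle : ζ ≤ ζ')
    (haxis : ∀ x, ζ ≤ x → HasAxisBound N x) (h : HasNonvanishingEigenvalue N ζ') :
    HasNonvanishingEigenvalue N ζ := by
  refine (isPreconnected_Icc (a := ζ) (b := ζ')).induction₂'
    (fun x y => HasNonvanishingEigenvalue N x → HasNonvanishingEigenvalue N y) (fun x hx => ?_)
    (fun _ _ _ _ _ _ hxy hyz => hyz ∘ hxy) (Set.right_mem_Icc.2 hle) (Set.left_mem_Icc.2 hle) h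
  have hcont : Continuous (Function.uncurry fun (x : ℝ) (p : ℝ × ℝ) =>
      hyperbolicTransfer N x (stripPoint x p)) :=
    (continuous_hyperbolicTransfer N).comp (f := fun q : ℝ × ℝ × ℝ => (q.1, stripPoint q.1 q.2))
      (by unfold stripPoint; fun_prop)
  have hsinh := Real.sinh_pos_iff.2 hζ
  have hε : 0 < 1 / 4 * Real.sinh ζ ^ N / (2 ^ N) ^ 3 := by positivity
  have hε' : ∀ y, ζ ≤ y →
      (2 ^ N) ^ 3 * (1 / 4 * Real.sinh ζ ^ N / (2 ^ N) ^ 3) < 1 / 2 * Real.sinh y ^ N := by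
    intro y hy
    rw [mul_div_cancel₀ _ (by positivity)]
    have hmono := pow_le_pow_left₀ hsinh.le (Real.sinh_le_sinh.2 hy) N
    have := pow_pos hsinh N
    linarith
  filter_upwards [self_mem_nhdsWithin, nhdsWithin_le_nhds <|
    eventually_forall_norm_sub_le hcont (isCompact_Icc.prod isCompact_Icc) x hε] with y hy hclose
  have hx0 := hζ.trans_le hx.1
  have hy0 := hζ.trans_le hy.1
  exact ⟨.of_forall_norm_sub_le hN hx0 hy0 (haxis x hx.1) hclose (hε' x hx.1),
    .of_forall_norm_sub_le hN hy0 hx0 (haxis y hy.1)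
      (fun p hp σ τ => norm_sub_rev _ _ |>.trans_le (hclose p hp σ τ)) (hε' y hy.1)⟩

end Continuation

section NeelState

/-- The alternating (Néel) row of arrows that starts with `x`. -/
def neelConfig (N : ℕ) (x : Bool) : Fin N → Bool := fun i => x ^^ i.1.bodd

lemma neelConfig_succ (N : ℕ) (x : Bool) :
    neelConfig (N + 1) x = Fin.cons x (neelConfig N (!x)) := by
  ext i
  refine Fin.cases ?_ (fun i => ?_) i <;> simp [neelConfig]

lemma neelConfig_true_ne_neelConfig_false {N : ℕ} (hN : N ≠ 0) :
    neelConfig N true ≠ neelConfig N false := fun h => by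
  simpa [neelConfig] using congrFun h ⟨0, Nat.pos_of_ne_zero hN⟩

section Lax

variable {R : Type*} [CommRing R]

lemma sixVertexLax_zero_one (a : R) (s s' h h' : Bool) :
    sixVertexLax a 0 1 s s' h h' = if h = s' ∧ h' = s then (if s = s' then a else 1) else 0 := by
  cases s <;> cases s' <;> cases h <;> cases h' <;> simp [sixVertexLax]

lemma monodromy_neelConfig (a : R) {N : ℕ} (x : Bool) (σ : Fin N → Bool) (h : Bool) :
    monodromy (sixVertexLax a 0 1) σ (neelConfig N x) h (x ^^ N.bodd) =
      if h = x ∧ σ = neelConfig N (!x) then 1 else 0 := by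
  induction N generalizing x h with
  | zero => simp [monodromy_zero, Matrix.one_apply, Subsingleton.elim σ (neelConfig 0 (!x))]
  | succ N ih =>
    have hend : (x ^^ (N + 1).bodd) = ((!x) ^^ N.bodd) := by simp
    have hσ : σ = neelConfig (N + 1) (!x) ↔ σ 0 = (!x) ∧ Fin.tail σ = neelConfig N x := by
      rw [neelConfig_succ, Bool.not_not, ← Fin.cons_self_tail σ, Fin.cons_inj, Fin.cons_zero,
        Fin.tail_cons]
    rw [monodromy_succ, Matrix.mul_apply, hend, neelConfig_succ, Fin.tail_cons, Fin.cons_zero]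
    simp only [ih, Bool.not_not, sixVertexLax_zero_one, hσ]
    rw [Finset.sum_eq_single (σ 0) (fun k _ hk => by simp [hk]) (by simp)]
    by_cases hh : h = x <;> by_cases h0 : σ 0 = !x <;> simp [hh, h0]

lemma monodromy_neelConfig_not (a : R) {N : ℕ} (x : Bool) (σ : Fin (N + 1) → Bool) (h : Bool) :
    monodromy (sixVertexLax a 0 1) σ (neelConfig (N + 1) x) (!x) h = 0 := by
  rw [monodromy_succ, Matrix.mul_apply, neelConfig_succ, Fin.cons_zero]
  exact Finset.sum_eq_zero fun k _ => by simp [sixVertexLax_zero_one]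

lemma transferMatrix_neelConfig (a : R) {N : ℕ} (hN : Even N) (hN0 : N ≠ 0) (x : Bool)
    (σ : Fin N → Bool) :
    transferMatrix (sixVertexLax a 0 1) N σ (neelConfig N x) =
      if σ = neelConfig N (!x) then 1 else 0 := by
  have hbodd : N.bodd = false := by
    obtain ⟨m, rfl⟩ := hN
    simp
  have hdiag := monodromy_neelConfig a x σ x
  obtain ⟨n, rfl⟩ := Nat.exists_eq_succ_of_ne_zero hN0
  have hoff := monodromy_neelConfig_not a x σ (!x)
  rw [hbodd, Bool.xor_false] at hdiag
  have htrace : ∀ M : Matrix Bool Bool R, M.trace = M x x + M (!x) (!x) := fun M => by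
    cases x <;> simp [Matrix.trace, add_comm]
  rw [transferMatrix, Matrix.of_apply, htrace, hdiag, hoff, add_zero]
  simp

lemma transferMatrix_sixVertexLax_smul (r a b c : R) (N : ℕ) :
    transferMatrix (sixVertexLax (r * a) (r * b) (r * c)) N =
      r ^ N • transferMatrix (sixVertexLax a b c) N := by
  rw [← transferMatrix_smul]
  congr 1
  ext s s' : 2
  exact sixVertexLax_smul r a b c s s'

end Lax

/-- The normalised sum of the two Néel rows, an eigenvector of the transfer matrix at `b = 0`. -/
def neelVector (N : ℕ) : (Fin N → Bool) → ℂ :=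
  (√2 : ℂ)⁻¹ • (Pi.single (neelConfig N true) 1 + Pi.single (neelConfig N false) 1)

variable {N : ℕ}

lemma star_neelVector_dotProduct_neelVector (hN0 : N ≠ 0) :
    star (neelVector N) ⬝ᵥ neelVector N = 1 := by
  have hne := neelConfig_true_ne_neelConfig_false hN0
  have hsqrt : (√2 : ℂ)⁻¹ * (√2 : ℂ)⁻¹ = 2⁻¹ := by
    rw [← mul_inv, ← Complex.ofReal_mul, Real.mul_self_sqrt zero_le_two, Complex.ofReal_ofNat]
  have hstar : star (√2 : ℂ)⁻¹ = (√2 : ℂ)⁻¹ := by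
    rw [star_inv₀, Complex.star_def, Complex.conj_ofReal]
  rw [neelVector, star_smul, hstar, star_add, ← Pi.single_star, ← Pi.single_star, star_one,
    smul_dotProduct, dotProduct_smul, dotProduct_add, dotProduct_single_one, dotProduct_single_one,
    smul_smul, hsqrt]
  simp only [Pi.add_apply, Pi.single_eq_same, Pi.single_eq_of_ne hne, Pi.single_eq_of_ne hne.symm,
    smul_eq_mul]
  norm_num

lemma transferMatrix_mulVec_neelVector (a : ℂ) (hN : Even N) (hN0 : N ≠ 0) :
    transferMatrix (sixVertexLax a 0 1) N *ᵥ neelVector N = (1 : ℂ) • neelVector N := by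
  rw [one_smul, neelVector, Matrix.mulVec_smul, Matrix.mulVec_add, Matrix.mulVec_single_one,
    Matrix.mulVec_single_one, add_comm]
  congr 1
  ext σ
  simp only [Pi.add_apply, Matrix.col_apply, transferMatrix_neelConfig a hN hN0, Pi.single_apply,
    Bool.not_true, Bool.not_false]

end NeelState

section LargeAnisotropy

variable {N : ℕ} {ζ : ℝ}

lemma norm_sinh_le_cosh (z : ℂ) : ‖sinh z‖ ≤ Real.cosh z.re := by
  refine le_of_sq_le_sq ?_ (Real.cosh_pos _).le
  rw [norm_sinh_sq, Real.cosh_sq]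
  gcongr
  exact Real.sin_sq_le_one _

lemma tendsto_sinh_atTop : Tendsto Real.sinh atTop atTop :=
  tendsto_atTop_mono' _ ((eventually_ge_atTop 0).mono fun _ => Real.self_le_sinh_iff.2) tendsto_id

lemma norm_sinh_sub_div_sinh_le {t : ℂ} (hζ : 1 ≤ Real.sinh ζ)
    (ht : t ∈ verticalClosedStrip 0 ζ) : ‖sinh (ζ - t) / sinh ζ‖ ≤ 2 := by
  have hζ0 : 0 < ζ := Real.sinh_pos_iff.1 (zero_lt_one.trans_le hζ)
  have hre : Real.cosh (ζ - t).re ≤ Real.cosh ζ := by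
    rw [Real.cosh_le_cosh, Complex.sub_re, Complex.ofReal_re, abs_of_pos hζ0, abs_le]
    constructor <;> linarith [ht.1, ht.2]
  have hcosh : Real.cosh ζ ≤ 2 * Real.sinh ζ := by
    have hexp := Real.cosh_sub_sinh ζ
    have : Real.exp (-ζ) ≤ 1 := Real.exp_le_one_iff.2 (by linarith)
    linarith
  rw [← Complex.ofReal_sinh, norm_div, Complex.norm_real, Real.norm_of_nonneg (by linarith),
    div_le_iff₀ (by linarith)]
  exact (norm_sinh_le_cosh _).trans (hre.trans hcosh)

lemma norm_sinh_div_sinh_le {t : ℂ} (hζ : 0 < ζ) (ht : t ∈ verticalClosedStrip 0 (ζ / 2)) :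
    ‖sinh t / sinh ζ‖ ≤ (2 * Real.sinh (ζ / 2))⁻¹ := by
  have hre : Real.cosh t.re ≤ Real.cosh (ζ / 2) := by
    rw [Real.cosh_le_cosh, abs_of_nonneg ht.1, abs_of_pos (half_pos hζ)]
    exact ht.2
  have hdouble : Real.sinh ζ = 2 * Real.sinh (ζ / 2) * Real.cosh (ζ / 2) := by
    rw [← Real.sinh_two_mul, mul_div_cancel₀ _ two_ne_zero]
  have hsinh : 0 < Real.sinh (ζ / 2) := Real.sinh_pos_iff.2 (half_pos hζ)
  have hpos := Real.sinh_pos_iff.2 hζ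
  rw [← Complex.ofReal_sinh, norm_div, Complex.norm_real, Real.norm_of_nonneg hpos.le,
    div_le_iff₀ hpos, hdouble, inv_mul_cancel_left₀ (mul_pos two_pos hsinh).ne']
  exact (norm_sinh_le_cosh t).trans hre

lemma hyperbolicTransfer_eq_smul (N : ℕ) (hζ : ζ ≠ 0) (t : ℂ) :
    hyperbolicTransfer N ζ t = sinh ζ ^ N •
      transferMatrix (sixVertexLax (sinh (ζ - t) / sinh ζ) (sinh t / sinh ζ) 1) N := by
  have hsinh : sinh ζ ≠ 0 := sinh_ne_zero_of_re_ne_zero (by simpa using hζ)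
  rw [← transferMatrix_sixVertexLax_smul, mul_div_cancel₀ _ hsinh, mul_div_cancel₀ _ hsinh,
    mul_one]
  rfl

lemma eventually_forall_norm_transferMatrix_sub_le (N : ℕ) {ε : ℝ} (hε : 0 < ε) :
    ∀ᶠ b : ℂ in 𝓝 0, ∀ a ∈ Metric.closedBall (0 : ℂ) 2, ∀ σ τ,
      ‖transferMatrix (sixVertexLax a b 1) N σ τ - transferMatrix (sixVertexLax a 0 1) N σ τ‖
        ≤ ε := by
  refine eventually_forall_norm_sub_le (f := fun b a => transferMatrix (sixVertexLax a b 1) N)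
    (continuous_matrix fun σ τ => ?_) (isCompact_closedBall _ _) 0 hε
  exact (differentiable_transferMatrix (𝕜 := ℂ)
    (L := fun p : ℂ × ℂ => sixVertexLax p.2 p.1 1)
    (differentiable_sixVertexLax (by fun_prop) (by fun_prop) (by fun_prop)) σ τ).continuous

lemma IsJointEigenpair.eigenvalue_ne_zero_of_forall_re_le_half {ψ : (Fin N → Bool) → ℂ}
    {Λ : ℂ → ℂ} (h : IsJointEigenpair (hyperbolicTransfer N ζ) ψ Λ)
    (hne : ∀ t ∈ verticalClosedStrip 0 (ζ / 2), Λ t ≠ 0) {t : ℂ}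
    (ht : t ∈ verticalClosedStrip 0 ζ) : Λ t ≠ 0 := by
  rcases le_total t.re (ζ / 2) with hle | hle
  · exact hne t ⟨ht.1, hle⟩
  · have hmem : ζ - conj t ∈ verticalClosedStrip 0 (ζ / 2) := by
      constructor <;> simp <;> linarith [ht.2]
    simpa [h.eigenvalue_reflect] using hne _ hmem

-- As `ζ → ∞` the rescaled transfer matrix tends, for `re t ≤ ζ / 2`, to the one with `b = 0`,
-- which fixes the Néel vector.
lemma eventually_hasNonvanishingEigenvalue (hN : Even N) (hN0 : N ≠ 0) :
    ∀ᶠ ζ in atTop, HasNonvanishingEigenvalue N ζ := by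
  have hε : (0 : ℝ) < 1 / 2 / (2 ^ N) ^ 3 := by positivity
  obtain ⟨δ, hδ, hclose⟩ := Metric.eventually_nhds_iff.1
    (eventually_forall_norm_transferMatrix_sub_le N hε)
  have hsmall : Tendsto (fun ζ : ℝ => (2 * Real.sinh (ζ / 2))⁻¹) atTop (𝓝 0) :=
    tendsto_inv_atTop_zero.comp ((tendsto_sinh_atTop.comp
      (tendsto_id.atTop_div_const two_pos)).const_mul_atTop two_pos)
  filter_upwards [hsmall.eventually_lt_const hδ, tendsto_sinh_atTop.eventually_ge_atTop 1]
    with ζ hζδ hζ1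
  have hζ : 0 < ζ := Real.sinh_pos_iff.1 (zero_lt_one.trans_le hζ1)
  have hsinh : sinh ζ ^ N ≠ 0 := pow_ne_zero _ (sinh_ne_zero_of_re_ne_zero hζ.ne')
  have hv := star_neelVector_dotProduct_neelVector hN0
  obtain ⟨U, hU, Λ, hdiag⟩ := exists_unitary_hyperbolicTransfer_mul_eq N hζ.ne'
  obtain ⟨j, hj, hoverlap⟩ := exists_isJointEigenpair_overlap hU hdiag hv
  refine ⟨_, _, hj, fun t => hj.eigenvalue_ne_zero_of_forall_re_le_half fun t ht h0 => ?_⟩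
  have ht' : t ∈ verticalClosedStrip 0 ζ := ⟨ht.1, ht.2.trans (half_le_self hζ.le)⟩
  have hleft := hj.star_vecMul t
  rw [h0, zero_smul, hyperbolicTransfer_eq_smul N hζ.ne', Matrix.vecMul_smul,
    smul_eq_zero_iff_right hsinh, ← zero_smul ℂ (star (U.col j))] at hleft
  have hdist := norm_sub_le_of_inv_card_le_overlap hj.unit hv hoverlap hleft
    (transferMatrix_mulVec_neelVector _ hN hN0)
    (hclose (by simpa using (norm_sinh_div_sinh_le hζ ht).trans_lt hζδ) _
      (by simpa using norm_sinh_sub_div_sinh_le hζ1 ht'))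
  rw [zero_sub, norm_neg, norm_one, Fintype.card_fun, Fintype.card_bool, Fintype.card_fin,
    Nat.cast_pow, Nat.cast_ofNat, mul_div_cancel₀ _ (by positivity)] at hdist
  norm_num at hdist

lemma eventually_exists_le_norm_eigenvalue (hζ : 0 < ζ) :
    ∀ᶠ N : ℕ in atTop, Even N → ∀ (U : Matrix (Fin N → Bool) (Fin N → Bool) ℂ)
      (Λ : (Fin N → Bool) → ℂ → ℂ), U ∈ unitaryGroup (Fin N → Bool) ℂ →
      (∀ t, hyperbolicTransfer N ζ t * U = U * diagonal fun j => Λ j t) →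
      ∀ t ∈ verticalClosedStrip 0 ζ,
        ∃ j, 1 / 2 * Real.exp (bulkFreeEnergy ζ t).re ^ N ≤ ‖Λ j t‖ := by
  filter_upwards [eventually_forall_hasAxisBound hζ, eventually_ne_atTop 0]
    with N haxis hN0 hN U Λ hU hdiag t ht
  obtain ⟨ζ', hle, hlarge⟩ := ((eventually_ge_atTop ζ).and
    (eventually_hasNonvanishingEigenvalue hN hN0)).exists
  obtain ⟨ψ, Λ', hψ, hne⟩ := hlarge.of_le hN hζ hle (haxis hN)
  obtain ⟨j, hj, hoverlap⟩ := exists_isJointEigenpair_overlap hU hdiag hψ.unit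
  have heq := norm_sub_le_of_inv_card_le_overlap hj.unit hψ.unit hoverlap (hj.star_vecMul t)
    (hψ.eig t) (ε := 0) (by simp)
  rw [mul_zero, norm_le_zero_iff, sub_eq_zero] at heq
  exact ⟨j, heq ▸ hψ.le_norm_eigenvalue hζ hN hne one_half_pos (haxis hN ζ le_rfl ψ Λ' hψ) ht⟩

end LargeAnisotropy

section PartitionFunction

variable {X R : Type*} [Fintype X] [DecidableEq X] [CommSemiring R]

lemma list_prod_ofFn_apply {n : ℕ} (A : Fin n → Matrix X X R) (u v : X) :
    (List.ofFn A).prod u v = ∑ x : Fin n → X,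
      (∏ i, A i ((Fin.cons u x : Fin (n + 1) → X) i.castSucc) (x i)) *
        if (Fin.cons u x : Fin (n + 1) → X) (Fin.last n) = v then 1 else 0 := by
  induction n generalizing u with
  | zero => simp [Matrix.one_apply]
  | succ n ih =>
    rw [List.ofFn_succ, List.prod_cons, Matrix.mul_apply, sum_fin_succ_pi]
    simp only [ih, Finset.mul_sum, Fin.prod_univ_succ, Fin.castSucc_zero, Fin.cons_zero,
      Fin.cons_succ, ← Fin.succ_castSucc, ← Fin.succ_last, mul_assoc]

lemma predF_zero (n : ℕ) : predF (0 : Fin (n + 1)) = Fin.last n :=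
  Fin.ext (by simp [predF])

lemma predF_succ {n : ℕ} (i : Fin n) : predF i.succ = i.castSucc :=
  Fin.ext (by
    simp only [predF, Fin.val_succ, Fin.val_castSucc]
    rw [show (i : ℕ) + 1 + (n + 1 - 1) = i + (n + 1) by omega, Nat.add_mod_right,
      Nat.mod_eq_of_lt (by omega)])

lemma sum_prod_predF_eq_trace {n : ℕ} (hn : n ≠ 0) (A : Fin n → Matrix X X R) :
    ∑ x : Fin n → X, ∏ i, A i (x (predF i)) (x i) = (List.ofFn A).prod.trace := by
  obtain ⟨m, rfl⟩ := Nat.exists_eq_succ_of_ne_zero hn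
  simp only [Matrix.trace, Matrix.diag_apply, list_prod_ofFn_apply]
  rw [Finset.sum_comm]
  refine Finset.sum_congr rfl fun x _ => ?_
  simp only [← Fin.succ_last, Fin.cons_succ, mul_ite, mul_one, mul_zero, Finset.sum_ite_eq,
    Finset.mem_univ, if_true]
  refine Finset.prod_congr rfl fun i _ => ?_
  congr 1
  refine Fin.cases ?_ (fun k => ?_) i
  · rw [predF_zero, Fin.castSucc_zero, Fin.cons_zero]
  · rw [predF_succ, ← Fin.succ_castSucc, Fin.cons_succ]

lemma transferMatrix_apply_eq_sum {S : Type*} (L : S → S → Matrix X X R) {N : ℕ} (hN : N ≠ 0)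
    (σ τ : Fin N → S) :
    transferMatrix L N σ τ = ∑ h : Fin N → X, ∏ i, L (σ i) (τ i) (h (predF i)) (h i) :=
  (sum_prod_predF_eq_trace hN _).symm

lemma trace_pow_eq_sum (A : Matrix X X R) {M : ℕ} (hM : M ≠ 0) :
    (A ^ M).trace = ∑ x : Fin M → X, ∏ j, A (x (predF j)) (x j) := by
  rw [sum_prod_predF_eq_trace hM fun _ => A, List.ofFn_const, List.prod_replicate]

lemma vWeight_eq_sixVertexLax (a b c : ℝ) {N M : ℕ} (ω : Cfg N M) (v : Fin N × Fin M) :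
    (if inArrows ω v = 2 then vWeight a b c ω v else 0)
      = sixVertexLax a b c (ω.2 (v.1, predF v.2)) (ω.2 v) (ω.1 (predF v.1, v.2)) (ω.1 v) := by
  unfold vWeight inArrows sixVertexLax
  generalize ω.2 (v.1, predF v.2) = s
  generalize ω.2 v = s'
  generalize ω.1 (predF v.1, v.2) = h
  generalize ω.1 v = h'
  cases s <;> cases s' <;> cases h <;> cases h' <;> simp

lemma W_eq_prod_sixVertexLax (a b c : ℝ) {N M : ℕ} (ω : Cfg N M) :
    (if IsSixVertex ω then W a b c ω else 0) = ∏ j : Fin M, ∏ i : Fin N,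
      sixVertexLax a b c (ω.2 (i, predF j)) (ω.2 (i, j)) (ω.1 (predF i, j)) (ω.1 (i, j)) := by
  calc (if IsSixVertex ω then W a b c ω else 0)
      = ∏ v, if inArrows ω v = 2 then vWeight a b c ω v else 0 := by
        simp [Finset.prod_ite_zero, W]
    _ = _ := by
        rw [Finset.prod_comm, ← Fintype.prod_prod_type']
        exact Finset.prod_congr rfl fun v _ => vWeight_eq_sixVertexLax a b c ω v

theorem Z_eq_trace_transferMatrix_pow (a b c : ℝ) {N M : ℕ} (hN : N ≠ 0) (hM : M ≠ 0) :
    Z N M a b c = (transferMatrix (sixVertexLax a b c) N ^ M).trace := by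
  let e : (Fin M → Fin N → Bool) ≃ (Fin N × Fin M → Bool) :=
    { toFun := fun x v => x v.2 v.1
      invFun := fun g j i => g (i, j)
      left_inv := fun _ => rfl
      right_inv := fun _ => rfl }
  simp only [Z, W_eq_prod_sixVertexLax, trace_pow_eq_sum _ hM, transferMatrix_apply_eq_sum _ hN]
  rw [Fintype.sum_prod_type, Finset.sum_comm, ← e.sum_comp]
  refine Finset.sum_congr rfl fun x _ => ?_
  rw [← e.sum_comp, Finset.prod_univ_sum, Fintype.piFinset_univ]
  rfl

end PartitionFunction

section ExponentialGrowth

lemma frequently_forall_half_le_re_pow {ι : Type*} [Finite ι] (μ : ι → Circle) :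
    ∃ᶠ M : ℕ in atTop, ∀ j, 1 / 2 ≤ ((μ j : ℂ) ^ M).re := by
  have hone : ∀ᶠ x : ι → Circle in 𝓝 1, ∀ j, 1 / 2 < (x j : ℂ).re := by
    refine eventually_all.mpr fun j => ?_
    have hre : Continuous fun x : ι → Circle => (x j : ℂ).re := by fun_prop
    exact hre.continuousAt.eventually (lt_mem_nhds (by norm_num))
  refine ((mapClusterPt_one_atTop_pow μ).frequently hone).mono fun M hM j => ?_
  simpa using (hM j).le

lemma frequently_forall_half_mul_norm_pow_le_re_pow {ι : Type*} [Finite ι] (d : ι → ℂ) :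
    ∃ᶠ M : ℕ in atTop, ∀ j, 1 / 2 * ‖d j‖ ^ M ≤ (d j ^ M).re := by
  refine (frequently_forall_half_le_re_pow fun j => Circle.exp (d j).arg).mono fun M hM j => ?_
  have polar : d j ^ M = ((‖d j‖ ^ M : ℝ) : ℂ) * (Circle.exp (d j).arg : ℂ) ^ M := by
    rw [Circle.coe_exp, Complex.ofReal_pow, ← mul_pow, Complex.norm_mul_exp_arg_mul_I]
  rw [polar, Complex.re_ofReal_mul, mul_comm]
  exact mul_le_mul_of_nonneg_left (hM j) (by positivity)

variable {k r ℓ : ℝ} {u : ℕ → ℝ}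

lemma log_mul_pow_div (hk : 0 < k) (hr : 0 < r) {M : ℕ} (hM : M ≠ 0) :
    Real.log (k * r ^ M) / M = Real.log k / M + Real.log r := by
  rw [Real.log_mul hk.ne' (by positivity), Real.log_pow]
  field_simp

lemma tendsto_log_mul_pow_div (hk : 0 < k) (hr : 0 < r) :
    Tendsto (fun M : ℕ => Real.log (k * r ^ M) / M) atTop (𝓝 (Real.log r)) := by
  have h := (tendsto_const_div_atTop_nhds_zero_nat (Real.log k)).add_const (Real.log r)
  rw [zero_add] at h
  refine h.congr' ?_
  filter_upwards [eventually_ne_atTop 0] with M hM using (log_mul_pow_div hk hr hM).symm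

lemma le_log_of_forall_le_mul_pow (hk : 0 < k) (hr : 0 < r) (hu : ∀ M, 0 < u M)
    (hℓ : Tendsto (fun M : ℕ => Real.log (u M) / M) atTop (𝓝 ℓ))
    (h : ∀ M, u M ≤ k * r ^ M) : ℓ ≤ Real.log r :=
  le_of_tendsto_of_tendsto' hℓ (tendsto_log_mul_pow_div hk hr) fun M => by
    gcongr
    exacts [hu M, h M]

lemma log_le_of_frequently_mul_pow_le (hk : 0 < k) (hr : 0 < r)
    (hℓ : Tendsto (fun M : ℕ => Real.log (u M) / M) atTop (𝓝 ℓ))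
    (h : ∃ᶠ M in atTop, k * r ^ M ≤ u M) : Real.log r ≤ ℓ := by
  have hdiff := hℓ.sub (tendsto_log_mul_pow_div hk hr)
  refine sub_nonneg.mp (ge_of_tendsto_of_frequently hdiff (h.mono fun M hM => ?_))
  rw [sub_nonneg]
  gcongr

section NonnegMatrix

variable {n : Type*} [Fintype n] [DecidableEq n] {A : Matrix n n ℝ}

lemma pow_diag_mul_le (hA : ∀ i j, 0 ≤ A i j) (M K : ℕ) (i : n) :
    (A ^ M) i i * (A ^ K) i i ≤ (A ^ (M + K)) i i := by
  rw [pow_add, Matrix.mul_apply]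
  exact Finset.single_le_sum (f := fun k => (A ^ M) i k * (A ^ K) k i)
    (fun k _ => mul_nonneg (Matrix.pow_apply_nonneg hA _ _ _) (Matrix.pow_apply_nonneg hA _ _ _))
    (Finset.mem_univ i)

lemma pow_apply_le_pow (hA : ∀ i j, 0 ≤ A i j) (M : ℕ) (i j : n) :
    (A ^ M) i j ≤ (1 + ∑ i, ∑ j, A i j) ^ M := by
  have sum_nonneg : 0 ≤ ∑ i, ∑ j, A i j :=
    Finset.sum_nonneg fun i _ => Finset.sum_nonneg fun j _ => hA i j
  induction M generalizing j with
  | zero => rw [pow_zero, pow_zero, Matrix.one_apply]; split_ifs <;> norm_num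
  | succ m ih =>
    have column_le : ∑ k, A k j ≤ ∑ k, ∑ j, A k j := Finset.sum_le_sum fun k _ =>
      Finset.single_le_sum (f := fun j => A k j) (fun j _ => hA k j) (Finset.mem_univ j)
    rw [pow_succ, Matrix.mul_apply, pow_succ]
    calc ∑ k, (A ^ m) i k * A k j ≤ ∑ k, (1 + ∑ i, ∑ j, A i j) ^ m * A k j :=
          Finset.sum_le_sum fun k _ => mul_le_mul_of_nonneg_right (ih k) (hA k j)
      _ = (1 + ∑ i, ∑ j, A i j) ^ m * ∑ k, A k j := by rw [Finset.mul_sum]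
      _ ≤ _ := by gcongr; linarith

variable (hA : ∀ i j, 0 ≤ A i j) (hdiag : ∀ i, 0 < A i i)
include hA hdiag

lemma pow_diag_pos (M : ℕ) (i : n) : 0 < (A ^ M) i i := by
  induction M with
  | zero => simp
  | succ m ih =>
    refine (mul_pos ih (hdiag i)).trans_le ?_
    simpa using pow_diag_mul_le hA m 1 i

lemma trace_pow_pos [Nonempty n] (M : ℕ) : 0 < (A ^ M).trace :=
  Finset.sum_pos (fun i _ => pow_diag_pos hA hdiag M i) Finset.univ_nonempty

lemma subadditive_neg_log_pow_diag (i : n) :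
    Subadditive fun M : ℕ => -Real.log ((A ^ M) i i) := fun M K => by
  have hM := pow_diag_pos hA hdiag M i
  have hK := pow_diag_pos hA hdiag K i
  have h := Real.log_le_log (mul_pos hM hK) (pow_diag_mul_le hA M K i)
  rw [Real.log_mul hM.ne' hK.ne'] at h
  linarith

lemma bddBelow_range_neg_log_pow_diag_div (i : n) :
    BddBelow (Set.range fun M : ℕ => -Real.log ((A ^ M) i i) / M) := by
  have sum_nonneg : 0 ≤ ∑ i, ∑ j, A i j :=
    Finset.sum_nonneg fun i _ => Finset.sum_nonneg fun j _ => hA i j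
  have log_nonneg : 0 ≤ Real.log (1 + ∑ i, ∑ j, A i j) := Real.log_nonneg (by linarith)
  refine ⟨-Real.log (1 + ∑ i, ∑ j, A i j), ?_⟩
  rintro _ ⟨M, rfl⟩
  have h := Real.log_le_log (pow_diag_pos hA hdiag M i) (pow_apply_le_pow hA M i i)
  rw [Real.log_pow] at h
  rcases M.eq_zero_or_pos with rfl | hM
  · simpa using log_nonneg
  · rw [le_div_iff₀ (by positivity)]
    linarith

lemma exists_tendsto_log_pow_diag_div (i : n) : ∃ ℓ : ℝ,
    Tendsto (fun M : ℕ => Real.log ((A ^ M) i i) / M) atTop (𝓝 ℓ) ∧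
      ∀ M, (A ^ M) i i ≤ Real.exp ℓ ^ M := by
  have hsub := subadditive_neg_log_pow_diag hA hdiag i
  have hbdd := bddBelow_range_neg_log_pow_diag_div hA hdiag i
  refine ⟨-hsub.lim, (hsub.tendsto_lim hbdd).neg.congr fun M => by rw [neg_div, neg_neg],
    fun M => ?_⟩
  rcases M.eq_zero_or_pos with rfl | hM
  · simp
  have h := hsub.lim_le_div hbdd hM.ne'
  rw [le_div_iff₀ (by positivity)] at h
  rw [← Real.exp_nat_mul, ← Real.log_le_iff_le_exp (pow_diag_pos hA hdiag M i)]
  linarith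

lemma exists_tendsto_log_trace_pow_div [Nonempty n] : ∃ ℓ : ℝ,
    Tendsto (fun M : ℕ => Real.log (A ^ M).trace / M) atTop (𝓝 ℓ) := by
  choose ℓ hlim hle using exists_tendsto_log_pow_diag_div hA hdiag
  obtain ⟨i₀, hi₀⟩ := Finite.exists_max ℓ
  have card_pos : (0 : ℝ) < Fintype.card n := mod_cast Fintype.card_pos
  have hupper := tendsto_log_mul_pow_div card_pos (Real.exp_pos (ℓ i₀))
  rw [Real.log_exp] at hupper
  have trace_le (M : ℕ) : (A ^ M).trace ≤ Fintype.card n * Real.exp (ℓ i₀) ^ M := by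
    rw [Matrix.trace, ← nsmul_eq_mul]
    refine Finset.sum_le_card_nsmul _ _ _ fun i _ => (hle i M).trans ?_
    gcongr
    exact hi₀ i
  refine ⟨ℓ i₀, tendsto_of_tendsto_of_tendsto_of_le_of_le (hlim i₀) hupper ?_ ?_⟩
  · intro M
    dsimp only
    gcongr
    · exact pow_diag_pos hA hdiag M i₀
    · exact Finset.single_le_sum (f := fun i => (A ^ M) i i)
        (fun i _ => Matrix.pow_apply_nonneg hA _ _ _) (Finset.mem_univ i₀)
  · intro M
    dsimp only
    gcongr
    exacts [trace_pow_pos hA hdiag M, trace_le M]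

end NonnegMatrix

section PowerSum

variable {ι : Type*} [Fintype ι] {d : ι → ℂ} (hu : ∀ M, (u M : ℂ) = ∑ j, d j ^ M)
  (hℓ : Tendsto (fun M : ℕ => Real.log (u M) / M) atTop (𝓝 ℓ))
include hu hℓ

lemma le_log_of_forall_norm_le [Nonempty ι] (hr : 0 < r) (hpos : ∀ M, 0 < u M)
    (hd : ∀ j, ‖d j‖ ≤ r) : ℓ ≤ Real.log r := by
  have card_pos : (0 : ℝ) < Fintype.card ι := mod_cast Fintype.card_pos
  refine le_log_of_forall_le_mul_pow card_pos hr hpos hℓ fun M => ?_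
  calc u M ≤ ‖(u M : ℂ)‖ := (le_abs_self _).trans_eq (Complex.norm_real _).symm
    _ ≤ ∑ j, ‖d j ^ M‖ := by rw [hu]; exact norm_sum_le _ _
    _ ≤ ∑ _j : ι, r ^ M := by simp only [norm_pow]; gcongr with j; exact hd j
    _ = Fintype.card ι * r ^ M := by simp

-- The phases of the `d j` are simultaneously close to `1` along infinitely many powers, so there
-- the power sum dominates each of its terms.
lemma log_le_of_le_norm (hr : 0 < r) {j₀ : ι} (hd : r ≤ ‖d j₀‖) : Real.log r ≤ ℓ := by
  refine log_le_of_frequently_mul_pow_le (k := 1 / 2) (by norm_num) hr hℓ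
    ((frequently_forall_half_mul_norm_pow_le_re_pow d).mono fun M hM => ?_)
  calc 1 / 2 * r ^ M ≤ 1 / 2 * ‖d j₀‖ ^ M := by gcongr
    _ ≤ (d j₀ ^ M).re := hM j₀
    _ ≤ ∑ j, (d j ^ M).re := Finset.single_le_sum (f := fun j => (d j ^ M).re)
        (fun j _ => le_trans (by positivity) (hM j)) (Finset.mem_univ j₀)
    _ = u M := by rw [← Complex.re_sum, ← hu, Complex.ofReal_re]

end PowerSum

end ExponentialGrowth

section FreeEnergy

section PositiveWeights

variable {a b c : ℝ} (ha : 0 < a) (hb : 0 < b) (hc : 0 < c) {N : ℕ} (hN : N ≠ 0)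

include ha hb hc in
lemma sixVertexLax_nonneg (s s' h h' : Bool) : 0 ≤ sixVertexLax a b c s s' h h' := by
  simp only [sixVertexLax, Matrix.of_apply]
  split_ifs <;> linarith

include ha hb in
lemma sixVertexLax_diag_pos (s h : Bool) : 0 < sixVertexLax a b c s s h h := by
  simp only [sixVertexLax, Matrix.of_apply, if_true]
  split_ifs <;> assumption

include ha hb hc hN

lemma transferMatrix_sixVertexLax_nonneg (σ τ : Fin N → Bool) :
    0 ≤ transferMatrix (sixVertexLax a b c) N σ τ := by
  rw [transferMatrix_apply_eq_sum _ hN]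
  exact Finset.sum_nonneg fun h _ => Finset.prod_nonneg fun i _ =>
    sixVertexLax_nonneg ha hb hc _ _ _ _

lemma transferMatrix_sixVertexLax_diag_pos (σ : Fin N → Bool) :
    0 < transferMatrix (sixVertexLax a b c) N σ σ := by
  rw [transferMatrix_apply_eq_sum _ hN]
  exact Finset.sum_pos'
    (fun h _ => Finset.prod_nonneg fun i _ => sixVertexLax_nonneg ha hb hc _ _ _ _)
    ⟨fun _ => true, Finset.mem_univ _, Finset.prod_pos fun i _ => sixVertexLax_diag_pos ha hb _ _⟩

lemma exists_tendsto_log_trace_transferMatrix_pow_div : ∃ ℓ, Tendsto (fun M : ℕ =>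
    Real.log (transferMatrix (sixVertexLax a b c) N ^ M).trace / M) atTop (𝓝 ℓ) :=
  exists_tendsto_log_trace_pow_div (transferMatrix_sixVertexLax_nonneg ha hb hc hN)
    (transferMatrix_sixVertexLax_diag_pos ha hb hc hN)

lemma trace_transferMatrix_sixVertexLax_pow_pos (M : ℕ) :
    0 < (transferMatrix (sixVertexLax a b c) N ^ M).trace :=
  trace_pow_pos (transferMatrix_sixVertexLax_nonneg ha hb hc hN)
    (transferMatrix_sixVertexLax_diag_pos ha hb hc hN) M

end PositiveWeights

lemma freeEnergyIs_of_tendsto_log_trace {a b c F k : ℝ} {g : ℕ → ℝ}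
    (hg : ∀ N, N ≠ 0 → Tendsto (fun M : ℕ =>
      Real.log (transferMatrix (sixVertexLax a b c) N ^ M).trace / M) atTop (𝓝 (g N)))
    (hF : ∀ᶠ N : ℕ in atTop, Even N → |g N - N * F| ≤ k) : FreeEnergyIs a b c F := by
  refine ⟨fun N => g N / N, fun N _ hN => ?_, ?_⟩
  · have hN0 : N ≠ 0 := by omega
    refine ((hg N hN0).div_const (N : ℝ)).congr' ?_
    filter_upwards [eventually_ne_atTop 0] with M hM
    rw [Z_eq_trace_transferMatrix_pow a b c hN0 hM, div_div]
  · rw [tendsto_iff_norm_sub_tendsto_zero]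
    refine squeeze_zero' (Eventually.of_forall fun _ => norm_nonneg _) ?_
      ((tendsto_const_div_atTop_nhds_zero_nat k).mono_left inf_le_left)
    rw [eventually_inf_principal]
    filter_upwards [hF, eventually_ne_atTop 0] with N hF hN hE
    rw [← mul_div_cancel_left₀ F (Nat.cast_ne_zero.2 hN), ← sub_div, norm_div, Real.norm_natCast,
      Real.norm_eq_abs]
    gcongr
    exact hF hE

lemma trace_transferMatrix_pow_eq_sum_eigenvalue_pow {N : ℕ} {ζ : ℝ}
    {U : Matrix (Fin N → Bool) (Fin N → Bool) ℂ} {Λ : (Fin N → Bool) → ℂ → ℂ}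
    (hU : U ∈ unitaryGroup (Fin N → Bool) ℂ)
    (hΛ : ∀ t, hyperbolicTransfer N ζ t * U = U * diagonal fun j => Λ j t) (ρ t : ℝ) (M : ℕ) :
    (((transferMatrix (sixVertexLax (ρ * Real.sinh (ζ - t)) (ρ * Real.sinh t) (ρ * Real.sinh ζ))
      N ^ M).trace : ℝ) : ℂ) = ∑ j, ((ρ : ℂ) ^ N * Λ j t) ^ M := by
  set T := transferMatrix
    (sixVertexLax (ρ * Real.sinh (ζ - t)) (ρ * Real.sinh t) (ρ * Real.sinh ζ)) N with hT
  have map_eq : Complex.ofRealHom.mapMatrix T = (ρ : ℂ) ^ N • hyperbolicTransfer N ζ t := by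
    rw [hT, RingHom.mapMatrix_apply, transferMatrix_map]
    simp only [sixVertexLax_map, map_mul, Complex.ofRealHom_eq_coe, Complex.ofReal_sinh,
      Complex.ofReal_sub]
    exact transferMatrix_sixVertexLax_smul _ _ _ _ N
  have diagonalised : ((ρ : ℂ) ^ N • hyperbolicTransfer N ζ t) * U
      = U * diagonal fun j => (ρ : ℂ) ^ N * Λ j t := by
    rw [Matrix.smul_mul, hΛ, ← Matrix.mul_smul, ← Matrix.diagonal_smul]
    rfl
  rw [← trace_pow_of_mul_eq_mul_diagonal hU diagonalised, ← map_eq, ← map_pow]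
  simp [Matrix.trace]

lemma log_pow_mul_mul_exp_pow {ρ k : ℝ} (hρ : 0 < ρ) (hk : 0 < k) (F : ℝ) (N : ℕ) :
    Real.log (ρ ^ N * (k * Real.exp F ^ N)) = N * (Real.log ρ + F) + Real.log k := by
  rw [Real.log_mul (by positivity) (by positivity), Real.log_mul (by positivity) (by positivity),
    Real.log_pow, Real.log_pow, Real.log_exp]
  ring

section Hyperbolic

variable {ρ ζ t : ℝ} (hρ : 0 < ρ) (ht0 : 0 < t) (htζ : t < ζ)
include hρ ht0 htζ

lemma eventually_abs_sub_le_log_two : ∀ᶠ N : ℕ in atTop, Even N → ∀ ℓ, Tendsto (fun M : ℕ =>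
    Real.log (transferMatrix (sixVertexLax (ρ * Real.sinh (ζ - t)) (ρ * Real.sinh t)
      (ρ * Real.sinh ζ)) N ^ M).trace / M) atTop (𝓝 ℓ) →
    |ℓ - N * (Real.log ρ + (bulkFreeEnergy ζ t).re)| ≤ Real.log 2 := by
  have hζ : 0 < ζ := ht0.trans htζ
  have ht : (t : ℂ) ∈ verticalClosedStrip 0 ζ := ⟨ht0.le, htζ.le⟩
  filter_upwards [eventually_exists_le_norm_eigenvalue hζ, eventually_ne_atTop 0]
    with N hlower hN hE ℓ hℓ
  obtain ⟨U, hU, Λ, hΛ⟩ := exists_unitary_hyperbolicTransfer_mul_eq N hζ.ne'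
  have htrace := trace_transferMatrix_pow_eq_sum_eigenvalue_pow hU hΛ ρ t
  have norm_eq (j) : ‖(ρ : ℂ) ^ N * Λ j t‖ = ρ ^ N * ‖Λ j t‖ := by
    rw [norm_mul, norm_pow, Complex.norm_real, Real.norm_of_nonneg hρ.le]
  have upper : ℓ ≤ Real.log (ρ ^ N * (2 * Real.exp (bulkFreeEnergy ζ t).re ^ N)) := by
    refine le_log_of_forall_norm_le htrace hℓ (by positivity)
      (trace_transferMatrix_sixVertexLax_pow_pos (mul_pos hρ (Real.sinh_pos_iff.2 (sub_pos.2 htζ)))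
        (mul_pos hρ (Real.sinh_pos_iff.2 ht0)) (mul_pos hρ (Real.sinh_pos_iff.2 hζ)) hN)
      fun j => ?_
    rw [norm_eq]
    gcongr
    exact (IsJointEigenpair.of_mul_eq_mul_diagonal hU hΛ j).norm_eigenvalue_le hζ hE ht
  have lower : Real.log (ρ ^ N * (1 / 2 * Real.exp (bulkFreeEnergy ζ t).re ^ N)) ≤ ℓ := by
    obtain ⟨j, hj⟩ := hlower hE U Λ hU hΛ t ht
    refine log_le_of_le_norm htrace hℓ (by positivity) (j₀ := j) ?_
    rw [norm_eq]
    gcongr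
  rw [log_pow_mul_mul_exp_pow hρ two_pos] at upper
  rw [log_pow_mul_mul_exp_pow hρ one_half_pos, one_div, Real.log_inv] at lower
  exact abs_le.2 ⟨by linarith, by linarith⟩

theorem freeEnergyIs_hyperbolic :
    FreeEnergyIs (ρ * Real.sinh (ζ - t)) (ρ * Real.sinh t) (ρ * Real.sinh ζ)
      (Real.log ρ + (bulkFreeEnergy ζ t).re) := by
  have hlim (N : ℕ) (hN : N ≠ 0) := exists_tendsto_log_trace_transferMatrix_pow_div
    (mul_pos hρ (Real.sinh_pos_iff.2 (sub_pos.2 htζ))) (mul_pos hρ (Real.sinh_pos_iff.2 ht0))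
    (mul_pos hρ (Real.sinh_pos_iff.2 (ht0.trans htζ))) hN
  choose! g hg using hlim
  refine freeEnergyIs_of_tendsto_log_trace (k := Real.log 2) hg ?_
  filter_upwards [eventually_abs_sub_le_log_two hρ ht0 htζ, eventually_ne_atTop 0]
    with N hbound hN hE using hbound hE _ (hg N hN)

end Hyperbolic

-- The scale is `ρ = b / sinh t`; then `c` is determined by `c² = a² + b² + 2ab cosh ζ`.
lemma exists_hyperbolic_parametrisation {a b c ζ t : ℝ} (hb : 0 < b) (hc : 0 < c)
    (hΔ : (a ^ 2 + b ^ 2 - c ^ 2) / (2 * a * b) = -Real.cosh ζ) (ht : 0 < t) (htζ : t < ζ)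
    (hab : a * Real.sinh t = b * Real.sinh (ζ - t)) :
    ∃ ρ > 0, a = ρ * Real.sinh (ζ - t) ∧ b = ρ * Real.sinh t ∧ c = ρ * Real.sinh ζ := by
  have sinh_t_pos : 0 < Real.sinh t := Real.sinh_pos_iff.2 ht
  have sinh_sub_pos : 0 < Real.sinh (ζ - t) := Real.sinh_pos_iff.2 (sub_pos.2 htζ)
  have sinh_ζ_pos : 0 < Real.sinh ζ := Real.sinh_pos_iff.2 (ht.trans htζ)
  obtain ⟨ρ, hρ⟩ : ∃ ρ, b = ρ * Real.sinh t := ⟨b / Real.sinh t, by field_simp⟩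
  have ρ_pos : 0 < ρ := pos_of_mul_pos_left (hρ ▸ hb) sinh_t_pos.le
  have ha' : a = ρ * Real.sinh (ζ - t) :=
    mul_right_cancel₀ sinh_t_pos.ne' (by rw [hab, hρ]; ring)
  refine ⟨ρ, ρ_pos, ha', hρ, ?_⟩
  have c_sq : c ^ 2 = a ^ 2 + b ^ 2 + 2 * a * b * Real.cosh ζ := by
    have hne : 2 * a * b ≠ 0 := by rw [ha']; positivity
    linarith [(div_eq_iff hne).1 hΔ]
  have sinh_sq : Real.sinh ζ ^ 2 = Real.sinh (ζ - t) ^ 2 + Real.sinh t ^ 2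
      + 2 * Real.sinh (ζ - t) * Real.sinh t * Real.cosh ζ := by
    obtain ⟨s, rfl⟩ : ∃ s, ζ = s + t := ⟨ζ - t, by ring⟩
    rw [add_sub_cancel_right, Real.sinh_add, Real.cosh_add]
    linear_combination Real.sinh s ^ 2 * Real.cosh_sq t + Real.sinh t ^ 2 * Real.cosh_sq s
  refine (pow_left_inj₀ hc.le (by positivity) two_ne_zero).1 ?_
  rw [c_sq, ha', hρ]
  linear_combination -ρ ^ 2 * sinh_sq

theorem free_energy_massive_general (a b c ζ θ : ℝ) (hb : 0 < b) (hc : 0 < c)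
    (hζ0 : 0 < ζ)
    (hζ : (a ^ 2 + b ^ 2 - c ^ 2) / (2 * a * b) = -Real.cosh ζ)
    (hθ0 : 0 < θ) (hθπ : θ < π)
    (hθ : a * Real.sinh (θ * ζ / π) = b * Real.sinh ((1 - θ / π) * ζ)) :
    FreeEnergyIs a b c
      (Real.log a + ζ * θ / π +
        ∑' n : ℕ, (Real.exp (-((n : ℝ) + 1) * ζ) / ((n : ℝ) + 1)) *
          (Real.sinh (2 * ((n : ℝ) + 1) * ζ * θ / π) / Real.cosh (((n : ℝ) + 1) * ζ))) := by
  obtain ⟨t, ht⟩ : ∃ t, t = θ * ζ / π := ⟨_, rfl⟩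
  have ht0 : 0 < t := by rw [ht]; positivity
  have htζ : t < ζ := by rw [ht, div_lt_iff₀ Real.pi_pos]; nlinarith
  rw [show (1 - θ / π) * ζ = ζ - t by rw [ht]; ring, ← ht] at hθ
  obtain ⟨ρ, hρ, ha', hb', hc'⟩ := exists_hyperbolic_parametrisation hb hc hζ ht0 htζ hθ
  have log_a : Real.log a = Real.log ρ + Real.log (Real.sinh (ζ - t)) := by
    rw [ha', Real.log_mul hρ.ne' (Real.sinh_pos_iff.2 (sub_pos.2 htζ)).ne']
  have sinh_arg (n : ℕ) : 2 * ((n : ℝ) + 1) * ζ * θ / π = 2 * ((n : ℝ) + 1) * t := by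
    rw [ht]; ring
  have value : Real.log a + t + ∑' n : ℕ, (Real.exp (-((n : ℝ) + 1) * ζ) / ((n : ℝ) + 1)) *
      (Real.sinh (2 * ((n : ℝ) + 1) * t) / Real.cosh (((n : ℝ) + 1) * ζ))
      = Real.log ρ + (bulkFreeEnergy ζ t).re := by
    rw [re_bulkFreeEnergy_ofReal ht0.le htζ, log_a]; ring
  simp only [sinh_arg]
  rw [mul_comm ζ θ, ← ht, value, ha', hb', hc']
  exact freeEnergyIs_hyperbolic hρ ht0 htζ

end FreeEnergy

end

/-- **Free energy of the six-vertex model in the regime `Δ < -1`** (Theorem 1.1,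
antiferroelectric/massive case): for `a ≥ b > 0`, `c > 0` with
`Δ := (a²+b²-c²)/(2ab) < -1`, parameterised by `ζ > 0` with `Δ = -cosh ζ` and
`θ ∈ (0,π)` with `a sinh(θζ/π) = b sinh((1-θ/π)ζ)`, the free energy exists and equals
`log a + ζθ/π + Σ_{n≥1} (e^{-nζ}/n) · sinh(2nζθ/π)/cosh(nζ)`. -/
theorem free_energy_massive (a b c ζ θ : ℝ)
    (hb : 0 < b) (hab : b ≤ a) (hc : 0 < c)
    (hΔ : (a ^ 2 + b ^ 2 - c ^ 2) / (2 * a * b) < -1)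
    (hζ0 : 0 < ζ)
    (hζ : (a ^ 2 + b ^ 2 - c ^ 2) / (2 * a * b) = -Real.cosh ζ)
    (hθ0 : 0 < θ) (hθπ : θ < π)
    (hθ : a * Real.sinh (θ * ζ / π) = b * Real.sinh ((1 - θ / π) * ζ)) :
    FreeEnergyIs a b c
      (Real.log a + ζ * θ / π +
        ∑' n : ℕ, (Real.exp (-((n : ℝ) + 1) * ζ) / ((n : ℝ) + 1)) *
          (Real.sinh (2 * ((n : ℝ) + 1) * ζ * θ / π) / Real.cosh (((n : ℝ) + 1) * ζ))) :=
  free_energy_massive_general a b c ζ θ hb hc hζ0 hζ hθ0 hθπ hθ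

end SixVertexFE
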